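/- arXiv:1910.09825 — 6 statements merged into one kernel-verified Lean document; each statement's English description precedes it below -/
import Mathlib

section
/- Let Q be a finite nonempty quasigroup. Then the number of associative triples satisfies a(Q) ≥ |Q|. That is, for any binary operation ∗ on a finite nonempty set Q such that for all a, b ∈ Q there exist unique x, y ∈ Q with a ∗ x = b and y ∗ a = b, the number of triples (x,y,z) ∈ Q³ with (x ∗ y) ∗ z = x ∗ (y ∗ z) is at least the cardinality of Q. -/
section LocalUnits

variable {Q : Type*} {mul : Q → Q → Q}

theorem assoc_of_local_units {e a f : Q} (he : mul e a = a) (hf : mul a f = a) :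
    mul (mul e a) f = mul e (mul a f) := by
  rw [he, hf, he]

theorem surjective_middle_of_assoc_triple (hleft : ∀ a, ∃ e, mul e a = a)
    (hright : ∀ a, ∃ f, mul a f = a) :
    Function.Surjective fun t : {t : Q × Q × Q //
      mul (mul t.1 t.2.1) t.2.2 = mul t.1 (mul t.2.1 t.2.2)} => t.1.2.1 := by
  intro a
  obtain ⟨e, he⟩ := hleft a
  obtain ⟨f, hf⟩ := hright a
  exact ⟨⟨(e, a, f), assoc_of_local_units he hf⟩, rfl⟩

theorem assoc_triples_ge_card_general (hleft : ∀ a, ∃ e, mul e a = a)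
    (hright : ∀ a, ∃ f, mul a f = a) :
    Cardinal.mk Q ≤ Cardinal.mk {t : Q × Q × Q //
      mul (mul t.1 t.2.1) t.2.2 = mul t.1 (mul t.2.1 t.2.2)} :=
  Cardinal.mk_le_of_surjective (surjective_middle_of_assoc_triple hleft hright)

end LocalUnits

/-- A finite nonempty quasigroup has at least `|Q|` associative triples. -/
theorem assoc_triples_ge_card (Q : Type*) [Fintype Q] [Nonempty Q] (mul : Q → Q → Q)
    (hQ : ∀ a b : Q, (∃! x, mul a x = b) ∧ (∃! y, mul y a = b)) :
    Fintype.card Q ≤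
      Nat.card {t : Q × Q × Q //
        mul (mul t.1 t.2.1) t.2.2 = mul t.1 (mul t.2.1 t.2.2)} := by
  rw [← Nat.card_eq_fintype_card]
  exact Cardinal.toNat_le_toNat (assoc_triples_ge_card_general
    (fun a => (hQ a a).2.exists) fun a => (hQ a a).1.exists) Cardinal.mk_lt_aleph0
end

section
/- Let q be an odd prime power and let a ∈ F_q be such that a ∉ {−1, 0, 1} and both a and a+1 are squares in F_q. Then the mapping L_{a,a²} is a Latin square: for every fixed x ∈ F_q the map y ↦ L_{a,a²}(x,y) is a bijection of F_q, and for every fixed y ∈ F_q the map x ↦ L_{a,a²}(x,y) is a bijection of F_q. -/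
open scoped Classical

/-!
Up to translations, the rows of `L_{a,b}` are the map multiplying squares by `a` and non-squares by
`b`, and its columns are the map multiplying squares by `a - 1` and non-squares by `b - 1`. Scaling
squares by `c` and non-squares by `d` is bijective as soon as `c * d` is a nonzero square: it is
multiplication by `c` after a map that fixes the squares and multiplies the non-squares by the
nonzero square `d / c`, which permutes the non-squares. For `b = a ^ 2` the two products are
`a ^ 2 * a` and `(a - 1) ^ 2 * (a + 1)`.
-/

/-- Multiplication by `c` on squares (including `0`) and by `d` on non-squares. Rows and columns of
`L_{a,b}` are translates of maps of this form. -/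
noncomputable def squareClassMul {M : Type*} [Mul M] (c d t : M) : M :=
  if IsSquare t then c * t else d * t

section GroupWithZero

variable {G : Type*} [CommGroupWithZero G] {c d : G}

theorem isSquare_mul_iff_of_isSquare_left (hc : c ≠ 0) (hcs : IsSquare c) (t : G) :
    IsSquare (c * t) ↔ IsSquare t :=
  ⟨fun h => by simpa only [mul_div_cancel_left₀ t hc] using h.div hcs, hcs.mul⟩

theorem squareClassMul_inv_squareClassMul (hc : c ≠ 0) (hd : d ≠ 0) (hcs : IsSquare c)
    (hds : IsSquare d) (t : G) : squareClassMul c⁻¹ d⁻¹ (squareClassMul c d t) = t := by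
  by_cases ht : IsSquare t <;>
    simp [squareClassMul, ht, isSquare_mul_iff_of_isSquare_left, hc, hd, hcs, hds]

theorem squareClassMul_bijective_of_isSquare (hc : c ≠ 0) (hd : d ≠ 0) (hcs : IsSquare c)
    (hds : IsSquare d) : Function.Bijective (squareClassMul c d) := by
  refine Function.bijective_iff_has_inverse.mpr ⟨squareClassMul c⁻¹ d⁻¹,
    squareClassMul_inv_squareClassMul hc hd hcs hds, fun t => ?_⟩
  simpa only [inv_inv] using
    squareClassMul_inv_squareClassMul (inv_ne_zero hc) (inv_ne_zero hd) hcs.inv hds.inv t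

theorem squareClassMul_eq_mul_squareClassMul_one_div (hc : c ≠ 0) (t : G) :
    squareClassMul c d t = c * squareClassMul 1 (d / c) t := by
  simp only [squareClassMul, mul_ite, one_mul, ← mul_assoc, mul_div_cancel₀ d hc]

theorem squareClassMul_bijective (hc : c ≠ 0) (hd : d ≠ 0) (hcd : IsSquare (c * d)) :
    Function.Bijective (squareClassMul c d) := by
  have hdiv : IsSquare (d / c) := by
    have h : d / c = c * d / (c * c) := (mul_div_mul_left d c hc).symm
    exact h ▸ hcd.div (IsSquare.mul_self c)
  have hone : Function.Bijective (squareClassMul 1 (d / c)) :=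
    squareClassMul_bijective_of_isSquare one_ne_zero (div_ne_zero hd hc) .one hdiv
  rw [funext (squareClassMul_eq_mul_squareClassMul_one_div hc)]
  exact (mulLeft_bijective₀ c hc).comp hone

end GroupWithZero

section Ring

variable {R : Type*} [Ring R]

/-- The binary operation `L_{a,b}`, in which `0` counts as a square. -/
noncomputable def squareClassOp (a b x y : R) : R :=
  if IsSquare (y - x) then x + a * (y - x) else x + b * (y - x)

theorem squareClassOp_eq_add_squareClassMul (a b x y : R) :
    squareClassOp a b x y = x + squareClassMul a b (y - x) := by
  simp only [squareClassOp, squareClassMul, add_ite]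

theorem squareClassOp_eq_add_squareClassMul_sub_one (a b x y : R) :
    squareClassOp a b x y = y + squareClassMul (a - 1) (b - 1) (y - x) := by
  simp only [squareClassOp, squareClassMul]
  split_ifs <;> noncomm_ring

end Ring

section Field

variable {F : Type*} [Field F] {a b : F}

theorem squareClassOp_left_bijective (ha : a ≠ 0) (hb : b ≠ 0) (hab : IsSquare (a * b)) (x : F) :
    Function.Bijective fun y => squareClassOp a b x y := by
  simp only [squareClassOp_eq_add_squareClassMul]
  exact (Equiv.addLeft x).bijective.comp
    ((squareClassMul_bijective ha hb hab).comp (Equiv.subRight x).bijective)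

theorem squareClassOp_right_bijective (ha : a ≠ 1) (hb : b ≠ 1)
    (hab : IsSquare ((a - 1) * (b - 1))) (y : F) :
    Function.Bijective fun x => squareClassOp a b x y := by
  simp only [squareClassOp_eq_add_squareClassMul_sub_one]
  exact (Equiv.addLeft y).bijective.comp
    ((squareClassMul_bijective (sub_ne_zero.mpr ha) (sub_ne_zero.mpr hb) hab).comp
      (Equiv.subLeft y).bijective)

theorem Laa2_isLatinSquare_general (ha_neg_one : a ≠ -1) (ha_zero : a ≠ 0) (ha_one : a ≠ 1)
    (ha : IsSquare a) (ha_add_one : IsSquare (a + 1)) :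
    (∀ x : F, Function.Bijective fun y => squareClassOp a (a ^ 2) x y) ∧
    (∀ y : F, Function.Bijective fun x => squareClassOp a (a ^ 2) x y) := by
  have hrow : IsSquare (a * a ^ 2) := ha.mul (IsSquare.sq a)
  have hcol : IsSquare ((a - 1) * (a ^ 2 - 1)) := by
    have h : (a - 1) * (a ^ 2 - 1) = (a - 1) ^ 2 * (a + 1) := by ring
    exact h ▸ (IsSquare.sq (a - 1)).mul ha_add_one
  have hsq_ne_one : a ^ 2 ≠ 1 := sq_ne_one_iff.mpr ⟨ha_one, ha_neg_one⟩
  exact ⟨squareClassOp_left_bijective ha_zero (pow_ne_zero 2 ha_zero) hrow,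
    squareClassOp_right_bijective ha_one hsq_ne_one hcol⟩

end Field

/-- If `a ∉ {-1,0,1}` and both `a` and `a+1` are squares, then `L_{a,a²}` is a
Latin square: all rows and all columns are bijections. -/
theorem Laa2_isLatinSquare (F : Type*) [Field F] [Fintype F]
    (q : ℕ) (hq : Fintype.card F = q) (hodd : Odd q)
    (a : F) (ha1 : a ≠ -1) (ha2 : a ≠ 0) (ha3 : a ≠ 1)
    (hs1 : IsSquare a) (hs2 : IsSquare (a + 1))
    (L : F → F → F)
    (hL : ∀ x y : F,
      L x y = if IsSquare (y - x) then x + a * (y - x) else x + a ^ 2 * (y - x)) :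
    (∀ x : F, Function.Bijective fun y => L x y) ∧
    (∀ y : F, Function.Bijective fun x => L x y) := by
  -- `hL` decides `IsSquare` through `Fintype F`, `squareClassOp` through choice.
  have hL_eq : L = squareClassOp a (a ^ 2) := funext₂ fun x y => by rw [hL, squareClassOp]; congr
  exact hL_eq ▸ Laa2_isLatinSquare_general ha1 ha2 ha3 hs1 hs2
end

section
/- Let q ≡ 1 (mod 4) be a prime power. Let a ∈ F_q be such that a ≠ −1, 0, 1, the elements a, a+1, a³−a−1 are squares in F_q, and the elements a−1, a²+1, a²−a−1, a²+a+1, a²+a−1 are non-squares in F_q. Then L_{a,a²} is the multiplication table of a maximally nonassociative quasigroup: L_{a,a²} is a Latin square (the binary operation (x,y) ↦ L_{a,a²}(x,y) is a quasigroup operation on F_q) and the number of triples (x,y,z) ∈ F_q³ with L_{a,a²}(L_{a,a²}(x,y), z) = L_{a,a²}(x, L_{a,a²}(y,z)) equals q. -/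
open scoped Classical

/-!
The operation is `x * y = x + f (y - x)`, where `f` multiplies squares by `a` and non-squares by
`a ^ 2`. It is a quasigroup because `f` and `x ↦ x - f x` are both bijective. In terms of
`u = y - x` and `v = z - y`, associativity of `(x, y, z)` reads
`f u + f (u + v - f u) = f (u + f v)`. Once the quadratic characters of `u`, `v`, `u + v - f u` and
`u + f v` are fixed, this is a linear equation between `u` and `v`, and in each of the sixteen cases
with `u, v ≠ 0` the residue conditions on `a` contradict the characters assumed.
-/

section Orthomorphism

variable {G : Type*} [AddCommGroup G] {f : G → G}

/-- An orthomorphism of an abelian group: a bijection `f` such that `x ↦ x - f x` is bijective too.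
The second map is the negative of the more usual `x ↦ f x - x`. -/
def IsOrthomorphism (f : G → G) : Prop :=
  Function.Bijective f ∧ Function.Bijective fun x => x - f x

/-- The translation-invariant operation on `G` defined by `f`; for an orthomorphism `f` it is a
quasigroup operation. -/
def translationMul (f : G → G) (x y : G) : G :=
  x + f (y - x)

/-- The condition on the differences `u = y - x` and `v = z - y` for `(x, y, z)` to be an
associative triple of `translationMul f`. -/
def IsAssociativePair (f : G → G) (u v : G) : Prop :=
  f u + f (u + v - f u) = f (u + f v)

lemma existsUnique_translationMul_right (hf : Function.Bijective f) (u v : G) :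
    ∃! x, translationMul f u x = v := by
  have hbij : Function.Bijective (translationMul f u) :=
    (Equiv.addLeft u).bijective.comp (hf.comp (Equiv.subRight u).bijective)
  exact hbij.existsUnique v

lemma existsUnique_translationMul_left (hf : Function.Bijective fun x => x - f x) (u v : G) :
    ∃! y, translationMul f y u = v := by
  have hcomp : (fun y => translationMul f y u) = fun y => u - ((u - y) - f (u - y)) := by
    funext y
    rw [translationMul]
    abel
  have hbij : Function.Bijective fun y => translationMul f y u := by
    rw [hcomp]
    exact (Equiv.subLeft u).bijective.comp (hf.comp (Equiv.subLeft u).bijective)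
  exact hbij.existsUnique v

lemma translationMul_assoc_iff (x y z : G) :
    translationMul f (translationMul f x y) z = translationMul f x (translationMul f y z) ↔
      IsAssociativePair f (y - x) (z - y) := by
  have hleft : z - (x + f (y - x)) = y - x + (z - y) - f (y - x) := by abel
  have hright : y + f (z - y) - x = y - x + f (z - y) := by abel
  simp only [translationMul, IsAssociativePair, hleft, hright, add_assoc, add_right_inj]

lemma IsOrthomorphism.eq_zero_of_apply_eq_self (hf : IsOrthomorphism f) (hf0 : f 0 = 0) {x : G}
    (hx : f x = x) : x = 0 :=
  hf.2.1 (by simp only [hx, hf0, sub_self])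

lemma IsOrthomorphism.isAssociativePair_zero_left_iff (hf : IsOrthomorphism f) (hf0 : f 0 = 0)
    {v : G} : IsAssociativePair f 0 v ↔ v = 0 := by
  simp only [IsAssociativePair, hf0, zero_add, sub_zero, hf.1.1.eq_iff]
  exact ⟨fun h => hf.eq_zero_of_apply_eq_self hf0 h.symm, fun h => by rw [h, hf0]⟩

lemma IsOrthomorphism.isAssociativePair_zero_right_iff (hf : IsOrthomorphism f) (hf0 : f 0 = 0)
    {u : G} : IsAssociativePair f u 0 ↔ u = 0 := by
  simp only [IsAssociativePair, hf0, add_zero, add_eq_left]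
  refine ⟨fun h => hf.eq_zero_of_apply_eq_self hf0 ?_, fun h => by simp only [h, hf0, sub_self]⟩
  exact (sub_eq_zero.1 (hf.1.1 (h.trans hf0.symm))).symm

lemma IsOrthomorphism.translationMul_assoc_iff_eq (hf : IsOrthomorphism f) (hf0 : f 0 = 0)
    (hassoc : ∀ u v, u ≠ 0 → v ≠ 0 → ¬ IsAssociativePair f u v) (x y z : G) :
    translationMul f (translationMul f x y) z = translationMul f x (translationMul f y z) ↔
      x = y ∧ y = z := by
  rw [translationMul_assoc_iff, eq_comm (a := x), eq_comm (a := y) (b := z), ← sub_eq_zero,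
    ← sub_eq_zero (a := z)]
  by_cases hu : y - x = 0
  · simp only [hu, hf.isAssociativePair_zero_left_iff hf0, true_and]
  by_cases hv : z - y = 0
  · simp only [hv, hf.isAssociativePair_zero_right_iff hf0, and_true]
  · simp only [hassoc _ _ hu hv, hu, false_and]

theorem IsOrthomorphism.card_associativeTriples (hf : IsOrthomorphism f) (hf0 : f 0 = 0)
    (hassoc : ∀ u v, u ≠ 0 → v ≠ 0 → ¬ IsAssociativePair f u v) :
    Nat.card {t : G × G × G // translationMul f (translationMul f t.1 t.2.1) t.2.2 =
      translationMul f t.1 (translationMul f t.2.1 t.2.2)} = Nat.card G := by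
  simp only [hf.translationMul_assoc_iff_eq hf0 hassoc]
  exact Nat.card_congr
    { toFun := fun t => t.1.1
      invFun := fun x => ⟨(x, x, x), rfl, rfl⟩
      left_inv := by
        rintro ⟨⟨x, y, z⟩, hxy, hyz⟩
        obtain rfl : x = y := hxy
        obtain rfl : x = z := hyz
        rfl
      right_inv := fun _ => rfl }

end Orthomorphism

section QuadraticMap

variable {F : Type*} [Field F]

/-- The map multiplying squares by `a` and non-squares by `b`, so that `translationMul` of it is
the operation `L_{a,b}`. -/
noncomputable def quadraticMap (a b x : F) : F :=
  if IsSquare x then a * x else b * x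

lemma quadraticMap_zero (a b : F) : quadraticMap a b 0 = 0 := by
  simp [quadraticMap]

lemma translationMul_quadraticMap (a b x y : F) [Decidable (IsSquare (y - x))] :
    translationMul (quadraticMap a b) x y =
      if IsSquare (y - x) then x + a * (y - x) else x + b * (y - x) := by
  unfold translationMul quadraticMap
  split_ifs <;> rfl

lemma sub_quadraticMap (a b x : F) : x - quadraticMap a b x = quadraticMap (1 - a) (1 - b) x := by
  unfold quadraticMap
  split_ifs <;> ring

lemma isSquare_of_mul_eq_mul {a b x y : F} (hb : b ≠ 0) (hab : IsSquare (a * b))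
    (hxy : a * x = b * y) (hx : IsSquare x) : IsSquare y := by
  have hy : y = a * b * x / (b * b) := by
    field_simp
    linear_combination -hxy
  rw [hy]
  exact (hab.mul hx).div (.mul_self b)

lemma quadraticMap_injective {a b : F} (ha : a ≠ 0) (hb : b ≠ 0) (hab : IsSquare (a * b)) :
    Function.Injective (quadraticMap a b) := by
  intro x y hxy
  unfold quadraticMap at hxy
  split_ifs at hxy with hx hy hy
  · exact mul_left_cancel₀ ha hxy
  · exact absurd (isSquare_of_mul_eq_mul hb hab hxy hx) hy
  · exact absurd (isSquare_of_mul_eq_mul hb hab hxy.symm hy) hx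
  · exact mul_left_cancel₀ hb hxy

lemma quadraticMap_surjective {a b : F} (ha : a ≠ 0) (hb : b ≠ 0) (hab : IsSquare (a * b)) :
    Function.Surjective (quadraticMap a b) := by
  intro y
  by_cases hy : IsSquare (y / a)
  · exact ⟨y / a, by rw [quadraticMap, if_pos hy, mul_div_cancel₀ _ ha]⟩
  · have hyb : ¬ IsSquare (y / b) := fun h =>
      hy (isSquare_of_mul_eq_mul ha (mul_comm a b ▸ hab)
        (by rw [mul_div_cancel₀ _ ha, mul_div_cancel₀ _ hb]) h)
    exact ⟨y / b, by rw [quadraticMap, if_neg hyb, mul_div_cancel₀ _ hb]⟩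

lemma quadraticMap_bijective {a b : F} (ha : a ≠ 0) (hb : b ≠ 0) (hab : IsSquare (a * b)) :
    Function.Bijective (quadraticMap a b) :=
  ⟨quadraticMap_injective ha hb hab, quadraticMap_surjective ha hb hab⟩

theorem isOrthomorphism_quadraticMap {a b : F} (ha0 : a ≠ 0) (hb0 : b ≠ 0) (ha1 : a ≠ 1)
    (hb1 : b ≠ 1) (hab : IsSquare (a * b)) (hab' : IsSquare ((1 - a) * (1 - b))) :
    IsOrthomorphism (quadraticMap a b) := by
  refine ⟨quadraticMap_bijective ha0 hb0 hab, ?_⟩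
  simp only [sub_quadraticMap]
  exact quadraticMap_bijective (sub_ne_zero.2 ha1.symm) (sub_ne_zero.2 hb1.symm) hab'

lemma isOrthomorphism_quadraticMap_sq {a : F} (ha0 : a ≠ 0) (ha1 : a ≠ 1) (ha_neg : a ≠ -1)
    (ha : IsSquare a) (ha_add : IsSquare (a + 1)) :
    IsOrthomorphism (quadraticMap a (a ^ 2)) := by
  have hab' : IsSquare ((1 - a) * (1 - a ^ 2)) := by
    rw [show (1 - a) * (1 - a ^ 2) = (1 - a) ^ 2 * (a + 1) by ring]
    exact (IsSquare.sq _).mul ha_add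
  exact isOrthomorphism_quadraticMap ha0 (pow_ne_zero 2 ha0) ha1
    (sq_ne_one_iff.2 ⟨ha1, ha_neg⟩) (ha.mul (.sq a)) hab'

end QuadraticMap

section AssociativePair

variable {F : Type*} [Field F] [Fintype F] {a u v : F}

local notation "χ" => quadraticChar F

lemma quadraticChar_neg_of_neg_one (hneg : χ (-1) = 1) (x : F) : χ (-x) = χ x := by
  rw [← neg_one_mul, map_mul, hneg, one_mul]

lemma quadraticMap_of_quadraticChar_eq_neg_one {x : F} (a b : F) (hx : χ x = -1) :
    quadraticMap a b x = b * x :=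
  if_neg (quadraticChar_neg_one_iff_not_isSquare.1 hx)

lemma quadraticMap_of_quadraticChar_ne_neg_one {x : F} (a b : F) (hx : χ x ≠ -1) :
    quadraticMap a b x = a * x :=
  if_pos (not_not.1 (mt quadraticChar_neg_one_iff_not_isSquare.2 hx))

lemma quadraticMap_of_quadraticChar_eq_one {x : F} (a b : F) (hx : χ x = 1) :
    quadraticMap a b x = a * x :=
  quadraticMap_of_quadraticChar_ne_neg_one a b (by rw [hx]; decide)

lemma quadraticMap_eq_cases (a b x : F) :
    χ x ≠ -1 ∧ quadraticMap a b x = a * x ∨ χ x = -1 ∧ quadraticMap a b x = b * x := by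
  by_cases hx : χ x = -1
  · exact Or.inr ⟨hx, quadraticMap_of_quadraticChar_eq_neg_one a b hx⟩
  · exact Or.inl ⟨hx, quadraticMap_of_quadraticChar_ne_neg_one a b hx⟩

lemma eq_of_mul_sub_one_mul_eq (ha : χ a = 1) (ha_sub : χ (a - 1) = -1) {x y : F}
    (h : a * (a - 1) * x = a * (a - 1) * y) : x = y := by
  have hχ : χ (a * (a - 1)) ≠ 0 := by
    rw [map_mul, ha, ha_sub]
    decide
  exact mul_left_cancel₀ (mt quadraticChar_eq_zero_iff.2 hχ) h

lemma not_isAssociativePair_quadraticMap_sq_of_one_of_one (hneg : χ (-1) = 1) (ha : χ a = 1)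
    (ha_add : χ (a + 1) = 1) (ha_sub : χ (a - 1) = -1) (hsq_add : χ (a ^ 2 + 1) = -1)
    (hu : χ u = 1) (hv : χ v = 1) : ¬ IsAssociativePair (quadraticMap a (a ^ 2)) u v := by
  have χ_neg := quadraticChar_neg_of_neg_one hneg
  have cancel {x y : F} := eq_of_mul_sub_one_mul_eq ha ha_sub (x := x) (y := y)
  intro h
  rw [IsAssociativePair, quadraticMap_of_quadraticChar_eq_one _ _ hu,
    quadraticMap_of_quadraticChar_eq_one _ _ hv] at h
  rcases quadraticMap_eq_cases a (a ^ 2) (u + v - a * u) with ⟨hl, el⟩ | ⟨-, el⟩ <;>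
    rcases quadraticMap_eq_cases a (a ^ 2) (u + a * v) with ⟨hr, er⟩ | ⟨hr, er⟩ <;>
    rw [el, er] at h
  · have hrel : u + a * v = -((a - 1) * u) := cancel (by linear_combination -a * h)
    have hχ := congrArg χ hrel
    simp only [map_mul, χ_neg, ha_sub, hu] at hχ
    omega
  · have hrel : (a + 1) * (u + v - a * u) = -((a ^ 2 + 1) * u) := cancel (by linear_combination -h)
    have hχ := congrArg χ hrel
    simp only [map_mul, χ_neg, ha_add, hsq_add, hu] at hχ
    omega
  · have hrel : a * u = 0 := cancel (by linear_combination -h)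
    have hχ := congrArg χ hrel
    simp only [map_mul, ha, hu, quadraticChar_zero] at hχ
    omega
  · have hrel : u + a * v = -(a * u) := cancel (by linear_combination -h)
    have hχ := congrArg χ hrel
    simp only [map_mul, χ_neg, ha, hu] at hχ
    omega

lemma not_isAssociativePair_quadraticMap_sq_of_one_of_neg_one (hneg : χ (-1) = 1) (ha : χ a = 1)
    (ha_add : χ (a + 1) = 1) (ha_sub : χ (a - 1) = -1) (hsq_sub_sub : χ (a ^ 2 - a - 1) = -1)
    (hsq_add_add : χ (a ^ 2 + a + 1) = -1) (hu : χ u = 1) (hv : χ v = -1) :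
    ¬ IsAssociativePair (quadraticMap a (a ^ 2)) u v := by
  have χ_neg := quadraticChar_neg_of_neg_one hneg
  have cancel {x y : F} := eq_of_mul_sub_one_mul_eq ha ha_sub (x := x) (y := y)
  intro h
  rw [IsAssociativePair, quadraticMap_of_quadraticChar_eq_one _ _ hu,
    quadraticMap_of_quadraticChar_eq_neg_one _ _ hv] at h
  rcases quadraticMap_eq_cases a (a ^ 2) (u + v - a * u) with ⟨-, el⟩ | ⟨-, el⟩ <;>
    rcases quadraticMap_eq_cases a (a ^ 2) (u + a ^ 2 * v) with ⟨-, er⟩ | ⟨hr, er⟩ <;>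
    rw [el, er] at h
  · have hrel : (a + 1) * v = -u := cancel (by linear_combination -h)
    have hχ := congrArg χ hrel
    simp only [map_mul, χ_neg, ha_add, hu, hv] at hχ
    omega
  · have hrel : (a ^ 2 + a + 1) * (u + a ^ 2 * v) = -((a ^ 2 - a - 1) * u) :=
      cancel (by linear_combination -a ^ 2 * h)
    have hχ := congrArg χ hrel
    simp only [map_mul, χ_neg, hsq_add_add, hsq_sub_sub, hu] at hχ
    omega
  · have hrel : a * v = -(a * u) := cancel (by linear_combination -h)
    have hχ := congrArg χ hrel
    simp only [map_mul, χ_neg, ha, hu, hv] at hχ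
    omega
  · have hrel : a * (a + 1) * v = -((a + 1) * u) := cancel (by linear_combination -h)
    have hχ := congrArg χ hrel
    simp only [map_mul, χ_neg, ha, ha_add, hu, hv] at hχ
    omega

lemma not_isAssociativePair_quadraticMap_sq_of_neg_one_of_one (hneg : χ (-1) = 1) (ha : χ a = 1)
    (ha_add : χ (a + 1) = 1) (ha_sub : χ (a - 1) = -1) (hsq_add_sub : χ (a ^ 2 + a - 1) = -1)
    (hu : χ u = -1) (hv : χ v = 1) : ¬ IsAssociativePair (quadraticMap a (a ^ 2)) u v := by
  have χ_neg := quadraticChar_neg_of_neg_one hneg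
  have cancel {x y : F} := eq_of_mul_sub_one_mul_eq ha ha_sub (x := x) (y := y)
  intro h
  rw [IsAssociativePair, quadraticMap_of_quadraticChar_eq_neg_one _ _ hu,
    quadraticMap_of_quadraticChar_eq_one _ _ hv] at h
  rcases quadraticMap_eq_cases a (a ^ 2) (u + v - a ^ 2 * u) with ⟨-, el⟩ | ⟨-, el⟩ <;>
    rcases quadraticMap_eq_cases a (a ^ 2) (u + a * v) with ⟨-, er⟩ | ⟨-, er⟩ <;>
    rw [el, er] at h
  · have hrel : v = -(a * u) := cancel (by linear_combination -h)
    have hχ := congrArg χ hrel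
    simp only [map_mul, χ_neg, ha, hu, hv] at hχ
    omega
  · have hrel : (a + 1) * v = -((a + 1) * u) := cancel (by linear_combination -h)
    have hχ := congrArg χ hrel
    simp only [map_mul, χ_neg, ha_add, hu, hv] at hχ
    omega
  · have hrel : (a ^ 2 + a - 1) * u = 0 := cancel (by linear_combination -h)
    have hχ := congrArg χ hrel
    simp only [map_mul, hsq_add_sub, hu, quadraticChar_zero] at hχ
    omega
  · have hrel : a * v = -(a * (a + 1) * u) := cancel (by linear_combination -h)
    have hχ := congrArg χ hrel
    simp only [map_mul, χ_neg, ha, ha_add, hu, hv] at hχ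
    omega

lemma not_isAssociativePair_quadraticMap_sq_of_neg_one_of_neg_one (hneg : χ (-1) = 1) (ha : χ a = 1)
    (ha_add : χ (a + 1) = 1) (ha_sub : χ (a - 1) = -1) (hcube : IsSquare (a ^ 3 - a - 1))
    (hsq_add_add : χ (a ^ 2 + a + 1) = -1) (hsq_add_sub : χ (a ^ 2 + a - 1) = -1)
    (hu : χ u = -1) (hv : χ v = -1) : ¬ IsAssociativePair (quadraticMap a (a ^ 2)) u v := by
  have χ_neg := quadraticChar_neg_of_neg_one hneg
  have cancel {x y : F} := eq_of_mul_sub_one_mul_eq ha ha_sub (x := x) (y := y)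
  intro h
  rw [IsAssociativePair, quadraticMap_of_quadraticChar_eq_neg_one _ _ hu,
    quadraticMap_of_quadraticChar_eq_neg_one _ _ hv] at h
  rcases quadraticMap_eq_cases a (a ^ 2) (u + v - a ^ 2 * u) with ⟨hl, el⟩ | ⟨-, el⟩ <;>
    rcases quadraticMap_eq_cases a (a ^ 2) (u + a ^ 2 * v) with ⟨hr, er⟩ | ⟨hr, er⟩ <;>
    rw [el, er] at h
  · -- At a root of `a ^ 3 - a - 1` we get `u + f v = 0`, whose character decides nothing.
    by_cases hroot : a ^ 3 - a - 1 = 0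
    · have hrel : (a + 1) * (u + v - a ^ 2 * u) = -(a * (a + 1) * u) :=
        cancel (by linear_combination -h - a * (a - 1) * u * hroot)
      have hχ := congrArg χ hrel
      simp only [map_mul, χ_neg, ha, ha_add, hu] at hχ
      omega
    · have hrel : (a + 1) * (u + a ^ 2 * v) = -((a ^ 3 - a - 1) * u) :=
        cancel (by linear_combination -a ^ 2 * h)
      have hχ := congrArg χ hrel
      have hcube_char := (quadraticChar_one_iff_isSquare hroot).2 hcube
      simp only [map_mul, χ_neg, ha_add, hcube_char, hu] at hχ
      omega
  · have hrel : (a ^ 2 + a + 1) * v = -((a + 1) * u) := cancel (by linear_combination -h)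
    have hχ := congrArg χ hrel
    simp only [map_mul, χ_neg, hsq_add_add, ha_add, hu, hv] at hχ
    omega
  · have hrel : a * v = -((a ^ 2 + a - 1) * u) := cancel (by linear_combination -h)
    have hχ := congrArg χ hrel
    simp only [map_mul, χ_neg, ha, hsq_add_sub, hu, hv] at hχ
    omega
  · have hrel : (a + 1) * (u + a ^ 2 * v) = -((a + 1) * (a + 1) * (a - 1) * u) :=
      cancel (by linear_combination -a * h)
    have hχ := congrArg χ hrel
    simp only [map_mul, χ_neg, ha_add, ha_sub, hu] at hχ
    omega

theorem not_isAssociativePair_quadraticMap_sq (hneg : χ (-1) = 1) (ha : χ a = 1)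
    (ha_add : χ (a + 1) = 1) (hcube : IsSquare (a ^ 3 - a - 1)) (ha_sub : χ (a - 1) = -1)
    (hsq_add : χ (a ^ 2 + 1) = -1) (hsq_sub_sub : χ (a ^ 2 - a - 1) = -1)
    (hsq_add_add : χ (a ^ 2 + a + 1) = -1) (hsq_add_sub : χ (a ^ 2 + a - 1) = -1)
    (hu : u ≠ 0) (hv : v ≠ 0) : ¬ IsAssociativePair (quadraticMap a (a ^ 2)) u v := by
  rcases quadraticChar_dichotomy hu with hu | hu <;> rcases quadraticChar_dichotomy hv with hv | hv
  · exact not_isAssociativePair_quadraticMap_sq_of_one_of_one hneg ha ha_add ha_sub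
      hsq_add hu hv
  · exact not_isAssociativePair_quadraticMap_sq_of_one_of_neg_one hneg ha ha_add ha_sub
      hsq_sub_sub hsq_add_add hu hv
  · exact not_isAssociativePair_quadraticMap_sq_of_neg_one_of_one hneg ha ha_add ha_sub
      hsq_add_sub hu hv
  · exact not_isAssociativePair_quadraticMap_sq_of_neg_one_of_neg_one hneg ha ha_add ha_sub
      hcube hsq_add_add hsq_add_sub hu hv

end AssociativePair

/-- Theorem 2.4: for a prime power `q ≡ 1 (mod 4)` and suitable `a`, the map
`L_{a,a²}` is a maximally nonassociative quasigroup. -/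
theorem Laa2_maximallyNonassociative_q1mod4 (F : Type*) [Field F] [Fintype F]
    (q : ℕ) (hq : Fintype.card F = q) (h4 : q % 4 = 1)
    (a : F) (ha1 : a ≠ -1) (ha2 : a ≠ 0) (ha3 : a ≠ 1)
    (hs1 : IsSquare a) (hs2 : IsSquare (a + 1)) (hs3 : IsSquare (a ^ 3 - a - 1))
    (hn1 : ¬ IsSquare (a - 1)) (hn2 : ¬ IsSquare (a ^ 2 + 1))
    (hn3 : ¬ IsSquare (a ^ 2 - a - 1)) (hn4 : ¬ IsSquare (a ^ 2 + a + 1))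
    (hn5 : ¬ IsSquare (a ^ 2 + a - 1))
    (L : F → F → F)
    (hL : ∀ x y : F,
      L x y = if IsSquare (y - x) then x + a * (y - x) else x + a ^ 2 * (y - x)) :
    (∀ u v : F, (∃! x, L u x = v) ∧ (∃! y, L y u = v)) ∧
    Nat.card {t : F × F × F //
      L (L t.1 t.2.1) t.2.2 = L t.1 (L t.2.1 t.2.2)} = q := by
  obtain rfl : L = translationMul (quadraticMap a (a ^ 2)) := by
    funext x y
    rw [hL, translationMul_quadraticMap]
  have horth := isOrthomorphism_quadraticMap_sq ha2 ha3 ha1 hs1 hs2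
  refine ⟨fun u v => ⟨existsUnique_translationMul_right horth.1 u v,
    existsUnique_translationMul_left horth.2 u v⟩, ?_⟩
  rw [← hq, ← Nat.card_eq_fintype_card]
  refine horth.card_associativeTriples (quadraticMap_zero _ _) fun u v hu hv => ?_
  have hneg : IsSquare (-1 : F) := FiniteField.isSquare_neg_one_iff.2 (by rw [hq, h4]; decide)
  have χ_one {x : F} (hx : x ≠ 0) (h : IsSquare x) : quadraticChar F x = 1 :=
    (quadraticChar_one_iff_isSquare hx).2 h
  have χ_neg_one {x : F} (h : ¬ IsSquare x) : quadraticChar F x = -1 :=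
    quadraticChar_neg_one_iff_not_isSquare.2 h
  exact not_isAssociativePair_quadraticMap_sq (χ_one (neg_ne_zero.2 one_ne_zero) hneg)
    (χ_one ha2 hs1) (χ_one (mt eq_neg_of_add_eq_zero_left ha1) hs2) hs3 (χ_neg_one hn1)
    (χ_neg_one hn2) (χ_neg_one hn3) (χ_neg_one hn4) (χ_neg_one hn5) hu hv
end

section
/- Let q ≡ 3 (mod 4) be a prime power. Let a ∈ F_q be such that a ≠ −1, 0, 1, the elements a, a+1, a−1, a²+1, a³+a²−1 are squares in F_q, and the elements a²−a+1, a²+a+1, a²+a−1 are non-squares in F_q. Then L_{a,a²} is the multiplication table of a maximally nonassociative quasigroup: L_{a,a²} is a Latin square (the binary operation (x,y) ↦ L_{a,a²}(x,y) is a quasigroup operation on F_q) and the number of triples (x,y,z) ∈ F_q³ with L_{a,a²}(L_{a,a²}(x,y), z) = L_{a,a²}(x, L_{a,a²}(y,z)) equals q. -/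
open scoped Classical

/-!
Write `L_{a,b}(x, y) = x + φ(y - x)`, where `φ = φ_{a,b}` multiplies squares by `a` and non-squares
by `b`. The rows of `L_{a,b}` are translates of `φ_{a,b}` and its columns are reflected translates
of `id - φ_{a,b} = φ_{1-a,1-b}`, and `φ_{a,b}` is bijective as soon as `a b` is a nonzero square.

With `u = y - x` and `v = z - y`, the triple `(x, y, z)` is associative exactly when
`φ u + φ (v + (u - φ u)) = φ (u + φ v)`. If `u = 0`, idempotence and cancellation force `v = 0`.
If `u ≠ 0`, deciding which of `u`, `v`, `v + (u - φ u)`, `u + φ v` are squares makes this a linear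
relation between `u` and `v`. In each of the sixteen cases the relation contradicts either `u ≠ 0`
or the assumed quadratic characters, because exactly one of `t`, `-t` is a square for `t ≠ 0`.
-/

section Squares

variable {F : Type*} [Field F] {s t : F}

lemma ne_zero_of_not_isSquare (ht : ¬ IsSquare t) : t ≠ 0 := by
  rintro rfl
  exact ht IsSquare.zero

lemma isSquare_of_isSquare_mul_left (hs : IsSquare s) (hs0 : s ≠ 0) (hst : IsSquare (s * t)) :
    IsSquare t := by
  simpa [hs0] using hst.div hs

lemma eq_zero_of_isSquare_of_eq_neg (hneg : ¬ IsSquare (-1 : F)) (hs : IsSquare s)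
    (ht : IsSquare t) (h : s = -t) : t = 0 := by
  by_contra ht0
  refine hneg (isSquare_of_isSquare_mul_left ht ht0 ?_)
  rwa [mul_neg_one, ← h]

lemma isSquare_mul_of_not_isSquare [Finite F] (hs : ¬ IsSquare s) (ht : ¬ IsSquare t) :
    IsSquare (s * t) := by
  have := Fintype.ofFinite F
  by_contra hst
  rw [← quadraticChar_neg_one_iff_not_isSquare] at hs ht hst
  rw [map_mul, hs, ht] at hst
  norm_num at hst

lemma isSquare_or_isSquare_neg_of_finite [Finite F] (hneg : ¬ IsSquare (-1 : F)) (t : F) :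
    IsSquare t ∨ IsSquare (-t) := by
  refine or_iff_not_imp_left.2 fun ht => ?_
  simpa using isSquare_mul_of_not_isSquare hneg ht

end Squares

section Magma

variable {Q : Type*} {op : Q → Q → Q}

lemma eq_of_left_alternative (hidem : ∀ x, op x x = x) (hleft : ∀ x, Function.Injective (op x))
    (hright : ∀ y, Function.Injective (op · y)) {x z : Q}
    (h : op (op x x) z = op x (op x z)) : x = z := by
  have hfix : z = op x z := hleft x (by rwa [hidem] at h)
  exact hright z (by simp only [← hfix, hidem])

lemma card_associative_triples (hassoc : ∀ x y z, op (op x y) z = op x (op y z) ↔ x = y ∧ y = z) :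
    Nat.card {t : Q × Q × Q // op (op t.1 t.2.1) t.2.2 = op t.1 (op t.2.1 t.2.2)} = Nat.card Q := by
  refine Nat.card_congr
    ⟨fun t => t.1.1, fun x => ⟨(x, x, x), (hassoc x x x).2 ⟨rfl, rfl⟩⟩, ?_, fun _ => rfl⟩
  rintro ⟨⟨x, y, z⟩, h⟩
  obtain ⟨rfl, rfl⟩ := (hassoc x y z).1 h
  rfl

end Magma

section QuadraticOp

variable {F : Type*} [Field F]

/-- The map `φ_{a,b}` multiplying squares by `a` and non-squares by `b`; when it and `id - φ_{a,b}`
are permutations it is known as a quadratic orthomorphism. -/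
noncomputable def quadraticOrthomorphism (a b t : F) : F :=
  if IsSquare t then a * t else b * t

/-- The operation `L_{a,b}`, whose associative triples are studied. It is given by its two-case
formula; `quadraticOp_eq_add` expresses it through `φ_{a,b}`. -/
noncomputable def quadraticOp (a b x y : F) : F :=
  if IsSquare (y - x) then x + a * (y - x) else x + b * (y - x)

variable {a b t : F}

lemma quadraticOrthomorphism_of_isSquare (ht : IsSquare t) :
    quadraticOrthomorphism a b t = a * t :=
  if_pos ht

lemma quadraticOrthomorphism_of_not_isSquare (ht : ¬ IsSquare t) :
    quadraticOrthomorphism a b t = b * t :=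
  if_neg ht

lemma self_sub_quadraticOrthomorphism (a b t : F) :
    t - quadraticOrthomorphism a b t = quadraticOrthomorphism (1 - a) (1 - b) t := by
  unfold quadraticOrthomorphism
  split_ifs <;> ring

lemma quadraticOrthomorphism_injective (ha : a ≠ 0) (hb : b ≠ 0) (hab : IsSquare (a * b)) :
    Function.Injective (quadraticOrthomorphism a b) := by
  have mul_ne_mul {s t : F} (hs : IsSquare s) (ht : ¬ IsSquare t) : a * s ≠ b * t := fun h =>
    ht <| isSquare_of_isSquare_mul_left hab (mul_ne_zero ha hb) <| by
      rw [mul_assoc, ← h, ← mul_assoc]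
      exact (IsSquare.mul_self a).mul hs
  intro s t h
  unfold quadraticOrthomorphism at h
  split_ifs at h with hs ht ht
  · exact mul_left_cancel₀ ha h
  · exact (mul_ne_mul hs ht h).elim
  · exact (mul_ne_mul ht hs h.symm).elim
  · exact mul_left_cancel₀ hb h

lemma quadraticOrthomorphism_surjective (ha : a ≠ 0) (hb : b ≠ 0) (hab : IsSquare (a * b)) :
    Function.Surjective (quadraticOrthomorphism a b) := by
  intro t
  by_cases hs : IsSquare (t / a)
  · exact ⟨t / a, by rw [quadraticOrthomorphism_of_isSquare hs, mul_div_cancel₀ t ha]⟩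
  · have hs' : ¬ IsSquare (t / b) := fun h => hs <| by
      have hta : t / a = t / b * (a * b) / (a * a) := by field_simp
      rw [hta]
      exact (h.mul hab).div (IsSquare.mul_self a)
    exact ⟨t / b, by rw [quadraticOrthomorphism_of_not_isSquare hs', mul_div_cancel₀ t hb]⟩

lemma quadraticOrthomorphism_bijective (ha : a ≠ 0) (hb : b ≠ 0) (hab : IsSquare (a * b)) :
    Function.Bijective (quadraticOrthomorphism a b) :=
  ⟨quadraticOrthomorphism_injective ha hb hab, quadraticOrthomorphism_surjective ha hb hab⟩

lemma quadraticOp_eq_add (a b x y : F) :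
    quadraticOp a b x y = x + quadraticOrthomorphism a b (y - x) :=
  (apply_ite (x + ·) _ _ _).symm

lemma quadraticOp_eq_sub (a b x y : F) :
    quadraticOp a b x y = y - quadraticOrthomorphism (1 - a) (1 - b) (y - x) := by
  rw [quadraticOp_eq_add, ← self_sub_quadraticOrthomorphism]
  ring

lemma quadraticOp_self (a b x : F) : quadraticOp a b x x = x := by
  simp [quadraticOp]

lemma quadraticOp_left_bijective (ha : a ≠ 0) (hb : b ≠ 0) (hab : IsSquare (a * b)) (x : F) :
    Function.Bijective (quadraticOp a b x) := by
  rw [funext (quadraticOp_eq_add a b x)]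
  exact (Equiv.addLeft x).bijective.comp
    ((quadraticOrthomorphism_bijective ha hb hab).comp (Equiv.subRight x).bijective)

lemma quadraticOp_right_bijective (ha : a ≠ 1) (hb : b ≠ 1) (hab : IsSquare ((1 - a) * (1 - b)))
    (y : F) : Function.Bijective (quadraticOp a b · y) := by
  simp only [quadraticOp_eq_sub]
  exact (Equiv.subLeft y).bijective.comp
    ((quadraticOrthomorphism_bijective (sub_ne_zero.2 ha.symm) (sub_ne_zero.2 hb.symm) hab).comp
      (Equiv.subLeft y).bijective)

lemma quadraticOp_assoc_iff (a b x y z : F) :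
    quadraticOp a b (quadraticOp a b x y) z = quadraticOp a b x (quadraticOp a b y z) ↔
      quadraticOrthomorphism a b (y - x) + quadraticOrthomorphism a b
          (z - y + (y - x - quadraticOrthomorphism a b (y - x))) =
        quadraticOrthomorphism a b (y - x + quadraticOrthomorphism a b (z - y)) := by
  have hw : z - (x + quadraticOrthomorphism a b (y - x)) =
      z - y + (y - x - quadraticOrthomorphism a b (y - x)) := by ring
  have hx : y + quadraticOrthomorphism a b (z - y) - x =
      y - x + quadraticOrthomorphism a b (z - y) := by ring
  simp only [quadraticOp_eq_add, add_assoc, add_right_inj, hw, hx]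

end QuadraticOp

section SquareClasses

variable {F : Type*} [Field F] {a u v : F}

local notation "φ" => quadraticOrthomorphism a (a ^ 2)

lemma nonassoc_of_isSquare_of_isSquare (hneg : ¬ IsSquare (-1 : F))
    (ha_neg1 : a ≠ -1) (ha0 : a ≠ 0) (ha1 : a ≠ 1)
    (ha : IsSquare a) (ha_add : IsSquare (a + 1)) (hcyclo4 : IsSquare (a ^ 2 + 1))
    (hu0 : u ≠ 0) (hu : IsSquare u) (hv : IsSquare v) :
    φ u + φ (v + (u - φ u)) ≠ φ (u + φ v) := by
  intro h
  have hcancel : a * (a - 1) ≠ 0 := mul_ne_zero ha0 (sub_ne_zero.2 ha1)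
  have ha_add_ne : a + 1 ≠ 0 := mt eq_neg_of_add_eq_zero_left ha_neg1
  have hcyclo4_ne : a ^ 2 + 1 ≠ 0 := fun h0 =>
    hneg (by rw [← eq_neg_of_add_eq_zero_left h0]; exact IsSquare.sq a)
  rw [quadraticOrthomorphism_of_isSquare hu, quadraticOrthomorphism_of_isSquare hv] at h
  by_cases hw : IsSquare (v + (u - a * u)) <;> by_cases hx : IsSquare (u + a * v) <;>
    simp only [quadraticOrthomorphism, hw, hx, if_true, if_false] at h
  · have hrel : v = -u := mul_left_cancel₀ hcancel (by linear_combination -h)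
    exact hu0 (eq_zero_of_isSquare_of_eq_neg hneg hv hu hrel)
  · have hrel : (a + 1) * (v + (u - a * u)) = -((a ^ 2 + 1) * u) :=
      mul_left_cancel₀ hcancel (by linear_combination -h)
    exact mul_ne_zero hcyclo4_ne hu0
      (eq_zero_of_isSquare_of_eq_neg hneg (ha_add.mul hw) (hcyclo4.mul hu) hrel)
  · have hrel : a * u = 0 := mul_left_cancel₀ hcancel (by linear_combination -h)
    exact mul_ne_zero ha0 hu0 hrel
  · have hrel : a * v = -((a + 1) * u) := mul_left_cancel₀ hcancel (by linear_combination -h)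
    exact mul_ne_zero ha_add_ne hu0
      (eq_zero_of_isSquare_of_eq_neg hneg (ha.mul hv) (ha_add.mul hu) hrel)

lemma nonassoc_of_isSquare_of_not_isSquare (hneg : ¬ IsSquare (-1 : F))
    (hor : ∀ t : F, IsSquare t ∨ IsSquare (-t)) (ha_neg1 : a ≠ -1) (ha0 : a ≠ 0) (ha1 : a ≠ 1)
    (ha : IsSquare a) (ha_add : IsSquare (a + 1)) (ha_sub : IsSquare (a - 1))
    (hcyclo6 : ¬ IsSquare (a ^ 2 - a + 1)) (hcyclo3 : ¬ IsSquare (a ^ 2 + a + 1))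
    (hu0 : u ≠ 0) (hu : IsSquare u) (hv : ¬ IsSquare v) :
    φ u + φ (v + (u - φ u)) ≠ φ (u + φ v) := by
  intro h
  have hcancel : a * (a - 1) ≠ 0 := mul_ne_zero ha0 (sub_ne_zero.2 ha1)
  have ha_add_ne : a + 1 ≠ 0 := mt eq_neg_of_add_eq_zero_left ha_neg1
  have hcyclo6_neg : IsSquare (-(a ^ 2 - a + 1)) := (hor _).resolve_left hcyclo6
  have hcyclo6_neg_ne : -(a ^ 2 - a + 1) ≠ 0 := neg_ne_zero.2 (ne_zero_of_not_isSquare hcyclo6)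
  rw [quadraticOrthomorphism_of_isSquare hu, quadraticOrthomorphism_of_not_isSquare hv] at h
  by_cases hw : IsSquare (v + (u - a * u)) <;> by_cases hx : IsSquare (u + a ^ 2 * v) <;>
    simp only [quadraticOrthomorphism, hw, hx, if_true, if_false] at h
  · have hrel : (a + 1) * (v + (u - a * u)) = -(a ^ 2 * u) :=
      mul_left_cancel₀ hcancel (by linear_combination -h)
    exact mul_ne_zero (pow_ne_zero 2 ha0) hu0
      (eq_zero_of_isSquare_of_eq_neg hneg (ha_add.mul hw) ((ha.pow 2).mul hu) hrel)
  · have hrel : (v + (u - a * u)) * (a ^ 2 + a + 1) = (a + 1) * -(a ^ 2 - a + 1) * u :=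
      mul_left_cancel₀ hcancel (by linear_combination -h)
    have hw0 : v + (u - a * u) ≠ 0 :=
      left_ne_zero_of_mul (hrel ▸ mul_ne_zero (mul_ne_zero ha_add_ne hcyclo6_neg_ne) hu0)
    exact hcyclo3 (isSquare_of_isSquare_mul_left hw hw0
      (hrel ▸ (ha_add.mul hcyclo6_neg).mul hu))
  · have hrel : u + a ^ 2 * v = -((a - 1) * (a + 1) * u) :=
      mul_left_cancel₀ hcancel (by linear_combination -a * h)
    exact mul_ne_zero (mul_ne_zero (sub_ne_zero.2 ha1) ha_add_ne) hu0
      (eq_zero_of_isSquare_of_eq_neg hneg hx ((ha_sub.mul ha_add).mul hu) hrel)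
  · have hrel : a * (v + (u - a * u)) = -(a ^ 2 - a + 1) * u :=
      mul_left_cancel₀ (mul_ne_zero ha_add_ne hcancel) (by linear_combination -h)
    exact hw (isSquare_of_isSquare_mul_left ha ha0 (hrel ▸ hcyclo6_neg.mul hu))

lemma nonassoc_of_not_isSquare_of_isSquare (hor : ∀ t : F, IsSquare t ∨ IsSquare (-t))
    (ha_neg1 : a ≠ -1) (ha0 : a ≠ 0) (ha1 : a ≠ 1)
    (ha : IsSquare a) (ha_add : IsSquare (a + 1)) (ha_sub : IsSquare (a - 1))
    (hquad : ¬ IsSquare (a ^ 2 + a - 1)) (hu : ¬ IsSquare u) (hv : IsSquare v) :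
    φ u + φ (v + (u - φ u)) ≠ φ (u + φ v) := by
  intro h
  have hcancel : a * (a - 1) ≠ 0 := mul_ne_zero ha0 (sub_ne_zero.2 ha1)
  have ha_add_ne : a + 1 ≠ 0 := mt eq_neg_of_add_eq_zero_left ha_neg1
  have hu_neg : IsSquare (-u) := (hor u).resolve_left hu
  have hu0 : u ≠ 0 := ne_zero_of_not_isSquare hu
  rw [quadraticOrthomorphism_of_not_isSquare hu, quadraticOrthomorphism_of_isSquare hv] at h
  by_cases hw : IsSquare (v + (u - a ^ 2 * u)) <;> by_cases hx : IsSquare (u + a * v) <;>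
    simp only [quadraticOrthomorphism, hw, hx, if_true, if_false] at h
  · have hrel : -u * (a ^ 2 + a - 1) = v + (u - a ^ 2 * u) :=
      mul_left_cancel₀ hcancel (by linear_combination h)
    exact hquad (isSquare_of_isSquare_mul_left hu_neg (neg_ne_zero.2 hu0) (hrel ▸ hw))
  · have hrel : u + a * v = (a - 1) * -u :=
      mul_left_cancel₀ (mul_ne_zero ha_add_ne hcancel) (by linear_combination -a * h)
    exact hx (hrel ▸ ha_sub.mul hu_neg)
  · have hrel : (a ^ 2 + a - 1) * u = 0 := mul_left_cancel₀ hcancel (by linear_combination -h)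
    exact mul_ne_zero (ne_zero_of_not_isSquare hquad) hu0 hrel
  · have hrel : v + (u - a ^ 2 * u) = a * (a + 1) * -u :=
      mul_left_cancel₀ (mul_ne_zero ha0 hcancel) (by linear_combination -h)
    exact hw (hrel ▸ (ha.mul ha_add).mul hu_neg)

lemma nonassoc_of_not_isSquare_of_not_isSquare (hor : ∀ t : F, IsSquare t ∨ IsSquare (-t))
    (ha_neg1 : a ≠ -1) (ha0 : a ≠ 0) (ha1 : a ≠ 1)
    (ha : IsSquare a) (ha_add : IsSquare (a + 1)) (hcubic : IsSquare (a ^ 3 + a ^ 2 - 1))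
    (hcyclo3 : ¬ IsSquare (a ^ 2 + a + 1)) (hu : ¬ IsSquare u) (hv : ¬ IsSquare v) :
    φ u + φ (v + (u - φ u)) ≠ φ (u + φ v) := by
  intro h
  have hcancel : a * (a - 1) ≠ 0 := mul_ne_zero ha0 (sub_ne_zero.2 ha1)
  have ha_add_ne : a + 1 ≠ 0 := mt eq_neg_of_add_eq_zero_left ha_neg1
  have hu_neg : IsSquare (-u) := (hor u).resolve_left hu
  have hu0 : u ≠ 0 := ne_zero_of_not_isSquare hu
  rw [quadraticOrthomorphism_of_not_isSquare hu, quadraticOrthomorphism_of_not_isSquare hv] at h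
  by_cases hw : IsSquare (v + (u - a ^ 2 * u)) <;> by_cases hx : IsSquare (u + a ^ 2 * v) <;>
    simp only [quadraticOrthomorphism, hw, hx, if_true, if_false] at h
  · have hrel : (a + 1) * v = a * -u := mul_left_cancel₀ hcancel (by linear_combination -h)
    exact hv (isSquare_of_isSquare_mul_left ha_add ha_add_ne (hrel ▸ ha.mul hu_neg))
  · have hrel : (v + (u - a ^ 2 * u)) * (a ^ 2 + a + 1) = a ^ 3 * (a + 1) * -u :=
      mul_left_cancel₀ hcancel (by linear_combination -h)
    have hw0 : v + (u - a ^ 2 * u) ≠ 0 := left_ne_zero_of_mul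
      (hrel ▸ mul_ne_zero (mul_ne_zero (pow_ne_zero 3 ha0) ha_add_ne) (neg_ne_zero.2 hu0))
    exact hcyclo3 (isSquare_of_isSquare_mul_left hw hw0
      (hrel ▸ ((ha.pow 3).mul ha_add).mul hu_neg))
  · have hrel : a * (v + (u - a ^ 2 * u)) = (a ^ 3 + a ^ 2 - 1) * -u :=
      mul_left_cancel₀ hcancel (by linear_combination -h)
    exact hw (isSquare_of_isSquare_mul_left ha ha0 (hrel ▸ hcubic.mul hu_neg))
  · have hrel : v = -u :=
      mul_left_cancel₀ (mul_ne_zero (mul_ne_zero ha0 ha_add_ne) hcancel) (by linear_combination -h)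
    exact hv (hrel ▸ hu_neg)

lemma nonassoc_of_ne_zero (hneg : ¬ IsSquare (-1 : F))
    (hor : ∀ t : F, IsSquare t ∨ IsSquare (-t)) (ha_neg1 : a ≠ -1) (ha0 : a ≠ 0) (ha1 : a ≠ 1)
    (ha : IsSquare a) (ha_add : IsSquare (a + 1)) (ha_sub : IsSquare (a - 1))
    (hcyclo4 : IsSquare (a ^ 2 + 1)) (hcubic : IsSquare (a ^ 3 + a ^ 2 - 1))
    (hcyclo6 : ¬ IsSquare (a ^ 2 - a + 1)) (hcyclo3 : ¬ IsSquare (a ^ 2 + a + 1))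
    (hquad : ¬ IsSquare (a ^ 2 + a - 1)) (hu0 : u ≠ 0) :
    φ u + φ (v + (u - φ u)) ≠ φ (u + φ v) := by
  by_cases hu : IsSquare u <;> by_cases hv : IsSquare v
  · exact nonassoc_of_isSquare_of_isSquare hneg ha_neg1 ha0 ha1 ha ha_add hcyclo4 hu0 hu hv
  · exact nonassoc_of_isSquare_of_not_isSquare hneg hor ha_neg1 ha0 ha1 ha ha_add ha_sub hcyclo6
      hcyclo3 hu0 hu hv
  · exact nonassoc_of_not_isSquare_of_isSquare hor ha_neg1 ha0 ha1 ha ha_add ha_sub hquad hu hv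
  · exact nonassoc_of_not_isSquare_of_not_isSquare hor ha_neg1 ha0 ha1 ha ha_add hcubic hcyclo3
      hu hv

end SquareClasses

theorem Laa2_maximallyNonassociative_q3mod4_general {F : Type*} [Field F]
    (hneg : ¬ IsSquare (-1 : F)) (hor : ∀ t : F, IsSquare t ∨ IsSquare (-t))
    {a : F} (ha_neg1 : a ≠ -1) (ha0 : a ≠ 0) (ha1 : a ≠ 1)
    (ha : IsSquare a) (ha_add : IsSquare (a + 1)) (ha_sub : IsSquare (a - 1))
    (hcyclo4 : IsSquare (a ^ 2 + 1)) (hcubic : IsSquare (a ^ 3 + a ^ 2 - 1))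
    (hcyclo6 : ¬ IsSquare (a ^ 2 - a + 1)) (hcyclo3 : ¬ IsSquare (a ^ 2 + a + 1))
    (hquad : ¬ IsSquare (a ^ 2 + a - 1)) :
    (∀ u v : F, (∃! x, quadraticOp a (a ^ 2) u x = v) ∧ ∃! y, quadraticOp a (a ^ 2) y u = v) ∧
      ∀ x y z : F, quadraticOp a (a ^ 2) (quadraticOp a (a ^ 2) x y) z =
        quadraticOp a (a ^ 2) x (quadraticOp a (a ^ 2) y z) ↔ x = y ∧ y = z := by
  have hleft := quadraticOp_left_bijective ha0 (pow_ne_zero 2 ha0) (ha.mul (ha.pow 2))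
  have hcol : IsSquare ((1 - a) * (1 - a ^ 2)) := by
    have hfactor : (1 - a) * (1 - a ^ 2) = (1 - a) ^ 2 * (a + 1) := by ring
    rw [hfactor]
    exact (IsSquare.sq (1 - a)).mul ha_add
  have hright := quadraticOp_right_bijective ha1 (by simp [ha1, ha_neg1]) hcol
  refine ⟨fun u v => ⟨(hleft u).existsUnique v, (hright u).existsUnique v⟩, fun x y z => ⟨?_, ?_⟩⟩
  · intro h
    by_cases hxy : x = y
    · subst hxy
      exact ⟨rfl, eq_of_left_alternative (quadraticOp_self a (a ^ 2))
        (fun x => (hleft x).injective) (fun y => (hright y).injective) h⟩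
    · exact absurd ((quadraticOp_assoc_iff ..).1 h)
        (nonassoc_of_ne_zero hneg hor ha_neg1 ha0 ha1 ha ha_add ha_sub hcyclo4 hcubic hcyclo6
          hcyclo3 hquad (sub_ne_zero.2 (Ne.symm hxy)))
  · rintro ⟨rfl, rfl⟩
    simp only [quadraticOp_self]

/-- Theorem 2.5: for a prime power `q ≡ 3 (mod 4)` and suitable `a`, the map
`L_{a,a²}` is a maximally nonassociative quasigroup. -/
theorem Laa2_maximallyNonassociative_q3mod4 (F : Type*) [Field F] [Fintype F]
    (q : ℕ) (hq : Fintype.card F = q) (h4 : q % 4 = 3)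
    (a : F) (ha1 : a ≠ -1) (ha2 : a ≠ 0) (ha3 : a ≠ 1)
    (hs1 : IsSquare a) (hs2 : IsSquare (a + 1)) (hs3 : IsSquare (a - 1))
    (hs4 : IsSquare (a ^ 2 + 1)) (hs5 : IsSquare (a ^ 3 + a ^ 2 - 1))
    (hn1 : ¬ IsSquare (a ^ 2 - a + 1)) (hn2 : ¬ IsSquare (a ^ 2 + a + 1))
    (hn3 : ¬ IsSquare (a ^ 2 + a - 1))
    (L : F → F → F)
    (hL : ∀ x y : F,
      L x y = if IsSquare (y - x) then x + a * (y - x) else x + a ^ 2 * (y - x)) :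
    (∀ u v : F, (∃! x, L u x = v) ∧ (∃! y, L y u = v)) ∧
    Nat.card {t : F × F × F //
      L (L t.1 t.2.1) t.2.2 = L t.1 (L t.2.1 t.2.2)} = q := by
  subst hq
  have hneg : ¬ IsSquare (-1 : F) := by
    rw [FiniteField.isSquare_neg_one_iff]
    exact not_not.2 h4
  obtain rfl : L = quadraticOp a (a ^ 2) := by
    funext x y
    rw [hL, quadraticOp]
    -- The two sides differ only in their `Decidable` instances.
    congr
  obtain ⟨hquasigroup, hassoc⟩ := Laa2_maximallyNonassociative_q3mod4_general hneg
    (isSquare_or_isSquare_neg_of_finite hneg) ha1 ha2 ha3 hs1 hs2 hs3 hs4 hs5 hn1 hn2 hn3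
  exact ⟨hquasigroup, (card_associative_triples hassoc).trans Nat.card_eq_fintype_card⟩
end

section
/- Suppose there exist maximally nonassociative quasigroups of orders r and s, where r and s are positive integers. Then there exists a maximally nonassociative quasigroup of order rs. That is, if there are finite sets Q₁, Q₂ with |Q₁| = r, |Q₂| = s and quasigroup operations on them whose numbers of associative triples equal r and s respectively, then there exists a set of cardinality rs with a quasigroup operation having exactly rs associative triples. -/
open Function

/-- `m` is a quasigroup operation: both kinds of linear equations are uniquely solvable. -/
def IsQuasigroupOp {Q : Type*} (m : Q → Q → Q) : Prop :=
  ∀ a b : Q, (∃! x, m a x = b) ∧ (∃! y, m y a = b)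

/-- The triple `t = (x, y, z)` associates under `m`. -/
def IsAssocTriple {Q : Type*} (m : Q → Q → Q) (t : Q × Q × Q) : Prop :=
  m (m t.1 t.2.1) t.2.2 = m t.1 (m t.2.1 t.2.2)

/-- The number `a(Q)` of associative triples of the operation `m` on `Q`, with the `Nat.card`
convention that an infinite number counts as `0`. -/
noncomputable def numAssocTriples {Q : Type*} (m : Q → Q → Q) : ℕ :=
  Nat.card {t : Q × Q × Q // IsAssocTriple m t}

/-- The operation of the direct product of `(Q₁, m₁)` and `(Q₂, m₂)`. -/
def prodOp {Q₁ Q₂ : Type*} (m₁ : Q₁ → Q₁ → Q₁) (m₂ : Q₂ → Q₂ → Q₂) (a b : Q₁ × Q₂) : Q₁ × Q₂ :=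
  (m₁ a.1 b.1, m₂ a.2 b.2)

theorem isQuasigroupOp_iff_bijective {Q : Type*} {m : Q → Q → Q} :
    IsQuasigroupOp m ↔ ∀ a, Bijective (fun x ↦ m a x) ∧ Bijective (fun y ↦ m y a) := by
  simp only [IsQuasigroupOp, bijective_iff_existsUnique, forall_and]

section Transport

variable {Q Q' : Type*} {m : Q → Q → Q}

theorem IsQuasigroupOp.arrowCongr_conj (hm : IsQuasigroupOp m) (e : Q ≃ Q') :
    IsQuasigroupOp (e.arrowCongr e.conj m) := by
  rw [isQuasigroupOp_iff_bijective] at hm ⊢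
  intro a
  obtain ⟨left_bij, right_bij⟩ := hm (e.symm a)
  exact ⟨e.bijective.comp (left_bij.comp e.symm.bijective),
    e.bijective.comp (right_bij.comp e.symm.bijective)⟩

theorem isAssocTriple_arrowCongr_conj_iff (e : Q ≃ Q') (t : Q × Q × Q) :
    IsAssocTriple (e.arrowCongr e.conj m) (e t.1, e t.2.1, e t.2.2) ↔ IsAssocTriple m t := by
  simp [IsAssocTriple]

theorem numAssocTriples_arrowCongr_conj (e : Q ≃ Q') :
    numAssocTriples (e.arrowCongr e.conj m) = numAssocTriples m :=
  (Nat.card_congr <| (e.prodCongr (e.prodCongr e)).subtypeEquiv fun t ↦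
    (isAssocTriple_arrowCongr_conj_iff e t).symm).symm

end Transport

section Prod

variable {Q₁ Q₂ : Type*} {m₁ : Q₁ → Q₁ → Q₁} {m₂ : Q₂ → Q₂ → Q₂}

theorem IsQuasigroupOp.prodOp (h₁ : IsQuasigroupOp m₁) (h₂ : IsQuasigroupOp m₂) :
    IsQuasigroupOp (prodOp m₁ m₂) := by
  rw [isQuasigroupOp_iff_bijective] at h₁ h₂ ⊢
  exact fun a ↦ ⟨(h₁ a.1).1.prodMap (h₂ a.2).1, (h₁ a.1).2.prodMap (h₂ a.2).2⟩

theorem isAssocTriple_prodOp_iff (t : (Q₁ × Q₂) × (Q₁ × Q₂) × (Q₁ × Q₂)) :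
    IsAssocTriple (prodOp m₁ m₂) t ↔
      IsAssocTriple m₁ (t.1.1, t.2.1.1, t.2.2.1) ∧ IsAssocTriple m₂ (t.1.2, t.2.1.2, t.2.2.2) :=
  Prod.ext_iff

theorem numAssocTriples_prodOp :
    numAssocTriples (prodOp m₁ m₂) = numAssocTriples m₁ * numAssocTriples m₂ := by
  let unzip : (Q₁ × Q₂) × (Q₁ × Q₂) × (Q₁ × Q₂) ≃ (Q₁ × Q₁ × Q₁) × (Q₂ × Q₂ × Q₂) :=
    ((Equiv.refl _).prodCongr (Equiv.prodProdProdComm Q₁ Q₂ Q₁ Q₂)).trans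
      (Equiv.prodProdProdComm Q₁ Q₂ (Q₁ × Q₁) (Q₂ × Q₂))
  calc numAssocTriples (prodOp m₁ m₂)
      = Nat.card {p : (Q₁ × Q₁ × Q₁) × (Q₂ × Q₂ × Q₂) //
          IsAssocTriple m₁ p.1 ∧ IsAssocTriple m₂ p.2} :=
        Nat.card_congr (unzip.subtypeEquiv isAssocTriple_prodOp_iff)
    _ = Nat.card ({t // IsAssocTriple m₁ t} × {t // IsAssocTriple m₂ t}) :=
        Nat.card_congr Equiv.subtypeProdEquivProd
    _ = numAssocTriples m₁ * numAssocTriples m₂ := Nat.card_prod _ _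

end Prod

/-- Lemma 3.4: maximally nonassociative quasigroups of orders `r` and `s` give
one of order `r * s`. -/
theorem maxNonassoc_product (r s : ℕ) (hr : 0 < r) (hs : 0 < s)
    (Q₁ : Type*) (m₁ : Q₁ → Q₁ → Q₁) (hcard₁ : Nat.card Q₁ = r)
    (hQ₁ : ∀ a b : Q₁, (∃! x, m₁ a x = b) ∧ (∃! y, m₁ y a = b))
    (ha₁ : Nat.card {t : Q₁ × Q₁ × Q₁ //
      m₁ (m₁ t.1 t.2.1) t.2.2 = m₁ t.1 (m₁ t.2.1 t.2.2)} = r)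
    (Q₂ : Type*) (m₂ : Q₂ → Q₂ → Q₂) (hcard₂ : Nat.card Q₂ = s)
    (hQ₂ : ∀ a b : Q₂, (∃! x, m₂ a x = b) ∧ (∃! y, m₂ y a = b))
    (ha₂ : Nat.card {t : Q₂ × Q₂ × Q₂ //
      m₂ (m₂ t.1 t.2.1) t.2.2 = m₂ t.1 (m₂ t.2.1 t.2.2)} = s) :
    ∃ (Q : Type) (m : Q → Q → Q),
      Nat.card Q = r * s ∧
      (∀ a b : Q, (∃! x, m a x = b) ∧ (∃! y, m y a = b)) ∧
      Nat.card {t : Q × Q × Q //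
        m (m t.1 t.2.1) t.2.2 = m t.1 (m t.2.1 t.2.2)} = r * s := by
  have : Finite Q₁ := Nat.finite_of_card_ne_zero (by lia)
  have : Finite Q₂ := Nat.finite_of_card_ne_zero (by lia)
  -- `Q₁ × Q₂` may live in a higher universe than `Type`, hence the transport to `Fin`.
  let e : Q₁ × Q₂ ≃ Fin (r * s) :=
    Finite.equivFinOfCardEq (by rw [Nat.card_prod, hcard₁, hcard₂])
  have card_assoc : numAssocTriples (e.arrowCongr e.conj (prodOp m₁ m₂)) = r * s :=
    calc numAssocTriples (e.arrowCongr e.conj (prodOp m₁ m₂))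
        = numAssocTriples (prodOp m₁ m₂) := numAssocTriples_arrowCongr_conj e
      _ = numAssocTriples m₁ * numAssocTriples m₂ := numAssocTriples_prodOp
      _ = r * s := congrArg₂ (· * ·) ha₁ ha₂
  exact ⟨Fin (r * s), e.arrowCongr e.conj (prodOp m₁ m₂), Nat.card_fin _,
    (IsQuasigroupOp.prodOp hQ₁ hQ₂).arrowCongr_conj e, card_assoc⟩
end

section
/- Let q be a prime power with q ≡ 1 (mod 4) and q ≥ 9. Then there exists a maximally nonassociative quasigroup of order q, i.e. a quasigroup operation on a set of cardinality q whose number of associative triples equals q. -/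
/-!
On a finite field `K` put `x * y = x + ψ (y - x)`, where `ψ` multiplies nonsquares by `b` and all
other elements by `a`. This is a quasigroup as soon as `a` and `b`, and likewise `1 - a` and
`1 - b`, are nonzero with equal quadratic characters. Translations are automorphisms, and scaling
by `c` either preserves `ψ` or swaps `a` and `b`, so the only triples to examine are `(0, 0, z)`
and, for both orders of `a` and `b`, `(1, 0, z)`.

When `-1` is a square and `b = a⁻¹`, the associativity equation for `(1, 0, z)` is linear in `z` in
each combination of characters, and its solution is inconsistent with that combination whenever
`a` is a square while `1 - a`, `a² - a - 1` and `a² + a - 1` are nonsquares. Such an `a` exists in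
every field with `116² ≤ q ≤ p²` elements, by Stepanov's method for character sums: a nonzero
auxiliary polynomial of controlled degree vanishes to high order wherever `f ^ ((q - 1) / 2)` takes
a prescribed value. The condition `q ≤ p²` is harmless because products of maximally nonassociative
quasigroups are maximally nonassociative, so only the orders `p` with `p ≡ 1 (mod 4)`, `p²` with
`p ≡ 3 (mod 4)`, and `5²`, `5³` are needed.

Below the threshold `a` is found by Euler's criterion, in `𝔽_p` or among the images of Gaussian
integers in `𝔽_{p²}`. No such `a` exists for `q = 17` and `q = 37`, nor in characteristic `5`, where
`a² - a - 1 = (a + 2)²`; the orders `17`, `37`, `25` and `125` use other pairs `a`, `b`.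
-/

namespace MaxNonassoc

open Function

section Quasigroup

variable {Q R : Type*}

/-- A quasigroup operation whose only associative triples are the diagonal ones `(x, x, x)`.
On a finite carrier this makes the quasigroup maximally nonassociative. -/
structure IsMaxNonassoc (m : Q → Q → Q) : Prop where
  bijective_left (a : Q) : Bijective (m a)
  bijective_right (a : Q) : Bijective (m · a)
  assoc_iff (x y z : Q) : m (m x y) z = m x (m y z) ↔ x = y ∧ y = z

theorem IsMaxNonassoc.card_assoc_triples {m : Q → Q → Q} (hm : IsMaxNonassoc m) :
    Nat.card {t : Q × Q × Q // m (m t.1 t.2.1) t.2.2 = m t.1 (m t.2.1 t.2.2)} = Nat.card Q := by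
  refine Nat.card_congr ⟨fun t => t.1.1,
    fun x => ⟨(x, x, x), (hm.assoc_iff x x x).2 ⟨rfl, rfl⟩⟩, ?_, fun x => rfl⟩
  rintro ⟨⟨x, y, z⟩, h⟩
  obtain ⟨rfl, rfl⟩ := (hm.assoc_iff x y z).1 h
  rfl

theorem IsMaxNonassoc.prodMap {m : Q → Q → Q} {n : R → R → R} (hm : IsMaxNonassoc m)
    (hn : IsMaxNonassoc n) :
    IsMaxNonassoc fun x y : Q × R => (m x.1 y.1, n x.2 y.2) where
  bijective_left a := (hm.bijective_left a.1).prodMap (hn.bijective_left a.2)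
  bijective_right a := (hm.bijective_right a.1).prodMap (hn.bijective_right a.2)
  assoc_iff x y z := by
    simp only [Prod.ext_iff, hm.assoc_iff, hn.assoc_iff]
    tauto

/-- `q` is the order of a quasigroup in which only the diagonal triples associate. -/
def IsMaxNonassocOrder (q : ℕ) : Prop :=
  ∃ (Q : Type) (m : Q → Q → Q), Nat.card Q = q ∧ IsMaxNonassoc m

theorem IsMaxNonassocOrder.mul {q r : ℕ} (hq : IsMaxNonassocOrder q)
    (hr : IsMaxNonassocOrder r) : IsMaxNonassocOrder (q * r) := by
  obtain ⟨Q, m, rfl, hm⟩ := hq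
  obtain ⟨R, n, rfl, hn⟩ := hr
  exact ⟨Q × R, _, Nat.card_prod Q R, hm.prodMap hn⟩

theorem IsMaxNonassocOrder.pow {q n : ℕ} (hq : IsMaxNonassocOrder q) (hn : n ≠ 0) :
    IsMaxNonassocOrder (q ^ n) := by
  induction n, Nat.one_le_iff_ne_zero.2 hn using Nat.le_induction with
  | base => rwa [pow_one]
  | succ n hn ih => exact pow_succ q n ▸ (ih (by omega)).mul hq

end Quasigroup

section TranslationOp

variable {G : Type*} [AddCommGroup G] {ψ : G → G}

/-- The operation `x * y = x + ψ (y - x)`, which commutes with all translations of `G`. It is a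
quasigroup operation exactly when `ψ` is an orthomorphism: `ψ` and `u ↦ u - ψ u` are bijective. -/
def translationOp (ψ : G → G) (x y : G) : G :=
  x + ψ (y - x)

theorem translationOp_add_add (x y t : G) :
    translationOp ψ (x + t) (y + t) = translationOp ψ x y + t := by
  simp only [translationOp, add_sub_add_right_eq_sub]
  abel

/-- The triple `(x, 0, z)` associates under `translationOp ψ`. By translation invariance these
triples determine all associative ones. -/
abbrev AssocZero (ψ : G → G) (x z : G) : Prop :=
  translationOp ψ (translationOp ψ x 0) z = translationOp ψ x (translationOp ψ 0 z)

/-- An orthomorphism `ψ` fixing `0` for which no triple `(x, 0, z)` other than `(0, 0, 0)`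
associates under `translationOp ψ`. -/
structure IsNonassocOrthomorphism (ψ : G → G) : Prop where
  map_zero : ψ 0 = 0
  bijective : Bijective ψ
  bijective_sub : Bijective fun u => u - ψ u
  eq_zero_of_assocZero (x z : G) : AssocZero ψ x z → x = 0 ∧ z = 0

theorem IsNonassocOrthomorphism.isMaxNonassoc (hψ : IsNonassocOrthomorphism ψ) :
    IsMaxNonassoc (translationOp ψ) where
  bijective_left a :=
    (Equiv.addLeft a).bijective.comp (hψ.bijective.comp (Equiv.subRight a).bijective)
  bijective_right a := by
    have h := (Equiv.subLeft a).bijective.comp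
      (hψ.bijective_sub.comp (Equiv.subLeft a).bijective)
    convert h using 2 with y
    simp only [translationOp, comp_apply, Equiv.subLeft_apply]
    abel
  assoc_iff x y z := by
    constructor
    · intro h
      have h' := hψ.eq_zero_of_assocZero (x - y) (z - y) <| by
        apply add_right_cancel (b := y)
        simpa only [AssocZero, ← translationOp_add_add, sub_add_cancel, zero_add] using h
      exact ⟨sub_eq_zero.1 h'.1, (sub_eq_zero.1 h'.2).symm⟩
    · rintro ⟨rfl, rfl⟩
      simp only [translationOp, sub_self, hψ.map_zero, add_zero]

theorem IsNonassocOrthomorphism.isMaxNonassocOrder {G : Type} [AddCommGroup G] {ψ : G → G}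
    (hψ : IsNonassocOrthomorphism ψ) : IsMaxNonassocOrder (Nat.card G) :=
  ⟨G, _, rfl, hψ.isMaxNonassoc⟩

theorem map_translationOp {H : Type*} [AddCommGroup H] {ψ' : H → H} {σ : G →+ H}
    (hσ : ∀ u, ψ' (σ u) = σ (ψ u)) (x y : G) :
    σ (translationOp ψ x y) = translationOp ψ' (σ x) (σ y) := by
  simp only [translationOp, map_add, ← hσ, map_sub]

theorem assocZero_map_iff {H : Type*} [AddCommGroup H] {ψ' : H → H} {σ : G →+ H}
    (hσ : Injective σ) (hσψ : ∀ u, ψ' (σ u) = σ (ψ u)) (x z : G) :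
    AssocZero ψ' (σ x) (σ z) ↔ AssocZero ψ x z := by
  rw [AssocZero, ← map_zero σ]
  simp only [← map_translationOp hσψ, hσ.eq_iff]

end TranslationOp

section QuadMap

variable {K : Type*} [Field K] [Fintype K] [DecidableEq K]

/-- Multiplication by `b` on the nonsquares of `K` and by `a` elsewhere. -/
def quadMap (a b u : K) : K :=
  if quadraticChar K u = -1 then b * u else a * u

theorem quadMap_of_eq_neg_one {a b u : K} (hu : quadraticChar K u = -1) :
    quadMap a b u = b * u :=
  if_pos hu

theorem quadMap_of_ne_neg_one {a b u : K} (hu : quadraticChar K u ≠ -1) :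
    quadMap a b u = a * u :=
  if_neg hu

theorem sub_quadMap (a b u : K) : u - quadMap a b u = quadMap (1 - a) (1 - b) u := by
  unfold quadMap
  split_ifs <;> ring

theorem quadMap_mul_of_eq_one {a b c : K} (hc : quadraticChar K c = 1) (u : K) :
    quadMap a b (c * u) = c * quadMap a b u := by
  simp only [quadMap, map_mul, hc, one_mul, mul_ite, mul_left_comm c]

theorem quadMap_mul_of_eq_neg_one {a b c : K} (hc : quadraticChar K c = -1) (u : K) :
    quadMap a b (c * u) = c * quadMap b a u := by
  rcases eq_or_ne u 0 with rfl | hu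
  · simp only [quadMap, mul_zero, ite_self]
  · rcases quadraticChar_dichotomy hu with h | h <;>
      simp [-quadraticChar_apply, quadMap, hc, h, mul_left_comm c]

theorem quadraticChar_quadMap {a b : K} (hab : quadraticChar K a = quadraticChar K b) (u : K) :
    quadraticChar K (quadMap a b u) = quadraticChar K a * quadraticChar K u := by
  unfold quadMap
  split_ifs <;> simp only [map_mul, hab]

theorem quadMap_bijective {a b : K} (ha : a ≠ 0)
    (hab : quadraticChar K a = quadraticChar K b) : Bijective (quadMap a b) := by
  refine Finite.injective_iff_bijective.1 fun u v huv => ?_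
  have hχa : quadraticChar K a ≠ 0 := mt quadraticChar_eq_zero_iff.1 ha
  have hb : b ≠ 0 := mt quadraticChar_eq_zero_iff.2 (hab ▸ hχa)
  have hχ : quadraticChar K u = quadraticChar K v := by
    have h := congrArg (quadraticChar K) huv
    rw [quadraticChar_quadMap hab, quadraticChar_quadMap hab] at h
    exact mul_left_cancel₀ hχa h
  unfold quadMap at huv
  rw [hχ] at huv
  split_ifs at huv
  · exact mul_left_cancel₀ hb huv
  · exact mul_left_cancel₀ ha huv

/-- The sign conditions on `a` under which `quadMap a a⁻¹` gives a maximally nonassociative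
quasigroup, for `K` with `-1` a square. -/
structure IsAdmissible (a : K) : Prop where
  self : quadraticChar K a = 1
  one_sub : quadraticChar K (1 - a) = -1
  sq_sub : quadraticChar K (a ^ 2 - a - 1) = -1
  sq_add : quadraticChar K (a ^ 2 + a - 1) = -1

theorem IsAdmissible.ne_zero {a : K} (ha : IsAdmissible a) : a ≠ 0 := by
  rintro rfl
  simpa using ha.self

theorem quadraticChar_neg (hneg : quadraticChar K (-1) = 1) (u : K) :
    quadraticChar K (-u) = quadraticChar K u := by
  rw [neg_eq_neg_one_mul, map_mul, hneg, one_mul]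

theorem IsAdmissible.of_mul_eq_one (hneg : quadraticChar K (-1) = 1) {a b : K}
    (ha : IsAdmissible a) (hab : a * b = 1) : IsAdmissible b := by
  have hχb : quadraticChar K b = 1 := by
    simpa only [map_mul, map_one, ha.self, one_mul] using congrArg (quadraticChar K) hab
  refine ⟨hχb, ?_, ?_, ?_⟩
  · rw [show 1 - b = -((1 - a) * b) by linear_combination -hab, quadraticChar_neg hneg,
      map_mul, ha.one_sub, hχb, mul_one]
  · rw [show b ^ 2 - b - 1 = -(b * b * (a ^ 2 + a - 1)) by
        linear_combination (a * b + 1 + b) * hab,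
      quadraticChar_neg hneg, map_mul, map_mul, ha.sq_add, hχb, one_mul, one_mul]
  · rw [show b ^ 2 + b - 1 = -(b * b * (a ^ 2 - a - 1)) by
        linear_combination (a * b + 1 - b) * hab,
      quadraticChar_neg hneg, map_mul, map_mul, ha.sq_sub, hχb, one_mul, one_mul]

-- In each branch the equation is linear in `z`, and its solution has a quadratic character
-- that contradicts the choice of the branch.
theorem not_assocZero_of_ne_neg_one {a b z : K} (hneg : quadraticChar K (-1) = 1)
    (ha : IsAdmissible a) (hb : IsAdmissible b) (hab : a * b = 1)
    (hz : quadraticChar K z ≠ -1) :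
    1 - a + quadMap a b (z - (1 - a)) ≠ 1 + quadMap a b (a * z - 1) := by
  intro h
  by_cases hv : quadraticChar K (z - (1 - a)) = -1 <;>
    by_cases hw : quadraticChar K (a * z - 1) = -1 <;>
    simp only [quadMap, hv, hw, if_true, if_false] at h
  · have e : b * (1 - a) * (z - (1 - a)) = -(b * (1 - a)) := by
      linear_combination h - a * hab
    have := congrArg (quadraticChar K) e
    simp only [quadraticChar_neg hneg, map_mul, hb.self, ha.one_sub, hv] at this
    omega
  · have e : (b - a ^ 2) * z = b * (1 - a) := by linear_combination h
    have e' : (b - a ^ 2) * (z - (1 - a)) = a * a * (1 - a) := by linear_combination h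
    have hχ := congrArg (quadraticChar K) e
    have hχ' := congrArg (quadraticChar K) e'
    simp only [map_mul, ha.self, hb.self, ha.one_sub, hv] at hχ hχ'
    have hone : quadraticChar K (b - a ^ 2) = 1 := by omega
    rw [hone] at hχ
    omega
  · have e : a * (1 - b) * z = b * (1 - a) * (a ^ 2 - a - 1) := by
      linear_combination h - (2 * a - a ^ 2) * hab
    have := congrArg (quadraticChar K) e
    simp only [map_mul, ha.self, hb.self, ha.one_sub, hb.one_sub, ha.sq_sub] at this
    omega
  · have e : a * (1 - a) * (a * z - 1) = -((1 - a) * a * (1 - a)) := by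
      linear_combination a * h
    have := congrArg (quadraticChar K) e
    rw [quadraticChar_neg hneg, map_mul, map_mul] at this
    simp only [map_mul _ ((1 - a) * a), map_mul _ (1 - a), ha.self, ha.one_sub] at this
    omega

theorem not_assocZero_of_eq_neg_one {a b z : K} (hneg : quadraticChar K (-1) = 1)
    (ha : IsAdmissible a) (hb : IsAdmissible b) (hab : a * b = 1)
    (hz : quadraticChar K z = -1) :
    1 - a + quadMap a b (z - (1 - a)) ≠ 1 + quadMap a b (b * z - 1) := by
  intro h
  by_cases hv : quadraticChar K (z - (1 - a)) = -1 <;>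
    by_cases hw : quadraticChar K (b * z - 1) = -1 <;>
    simp only [quadMap, hv, hw, if_true, if_false] at h
  · have e : b * (1 - b) * z = a * (1 - b) := by linear_combination h
    have := congrArg (quadraticChar K) e
    simp only [map_mul, ha.self, hb.self, hb.one_sub, hz] at this
    omega
  · have e : b * (1 - a) * z = b * (1 - a) := by linear_combination h
    have := congrArg (quadraticChar K) e
    simp only [map_mul, hb.self, ha.one_sub, hz] at this
    omega
  · have e : (a - b ^ 2) * z = b * (1 - a) * (a ^ 2 - a - 1) := by
      linear_combination h - (2 * a - a ^ 2) * hab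
    have e' : (a - b ^ 2) * (z - (1 - a)) = -(b * b * (1 - a) * (a ^ 2 + a - 1)) := by
      linear_combination h + (b - a - a ^ 2 * b) * hab
    have hχ := congrArg (quadraticChar K) e
    have hχ' := congrArg (quadraticChar K) e'
    simp only [quadraticChar_neg hneg, map_mul, hb.self, ha.one_sub, ha.sq_sub, ha.sq_add, hz]
      at hχ hχ'
    have hneg_one : quadraticChar K (a - b ^ 2) = -1 := by omega
    rw [hneg_one] at hχ'
    omega
  · have e : a * (1 - b) * z = a * (1 - a) := by linear_combination h
    have := congrArg (quadraticChar K) e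
    simp only [map_mul, ha.self, ha.one_sub, hb.one_sub, hz] at this
    omega

theorem not_assocZero_one {a b : K} (hneg : quadraticChar K (-1) = 1)
    (ha : IsAdmissible a) (hb : IsAdmissible b) (hab : a * b = 1) (z : K) :
    ¬AssocZero (quadMap a b) 1 z := by
  have hone : 1 + quadMap a b (0 - 1) = 1 - a := by
    rw [zero_sub, quadMap_of_ne_neg_one (by rw [hneg]; decide)]
    ring
  simp only [AssocZero, translationOp, hone, zero_add, sub_zero]
  by_cases hz : quadraticChar K z = -1
  · rw [quadMap_of_eq_neg_one hz]
    exact not_assocZero_of_eq_neg_one hneg ha hb hab hz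
  · rw [quadMap_of_ne_neg_one hz]
    exact not_assocZero_of_ne_neg_one hneg ha hb hab hz

theorem isNonassocOrthomorphism_quadMap {a b : K} (ha : a ≠ 0) (ha' : 1 - a ≠ 0)
    (hab : quadraticChar K a = quadraticChar K b)
    (hab' : quadraticChar K (1 - a) = quadraticChar K (1 - b))
    (hassoc : ∀ z, ¬AssocZero (quadMap a b) 1 z) (hassoc' : ∀ z, ¬AssocZero (quadMap b a) 1 z) :
    IsNonassocOrthomorphism (quadMap a b) := by
  have hzero : quadMap a b 0 = 0 := by simp only [quadMap, mul_zero, ite_self]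
  have hbij := quadMap_bijective ha hab
  have hbij_sub : Bijective fun u => u - quadMap a b u := by
    simpa only [sub_quadMap] using quadMap_bijective ha' hab'
  refine ⟨hzero, hbij, hbij_sub, fun x z h => ?_⟩
  rcases eq_or_ne x 0 with rfl | hx
  · simp only [AssocZero, translationOp, sub_zero, zero_add, hzero] at h
    have hfix : z = quadMap a b z := hbij.1 h
    exact ⟨rfl, hbij_sub.1 (by simp only [← hfix, hzero, sub_self])⟩
  · obtain ⟨w, rfl⟩ : ∃ w, z = x * w := ⟨x⁻¹ * z, (mul_inv_cancel_left₀ hx z).symm⟩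
    have hunscale {c d : K} (hcd : ∀ u, quadMap a b (x * u) = x * quadMap c d u) :
        AssocZero (quadMap c d) 1 w := by
      rw [← assocZero_map_iff (σ := AddMonoidHom.mulLeft x) (mul_right_injective₀ hx) hcd]
      simpa only [AddMonoidHom.coe_mulLeft, mul_one] using h
    rcases quadraticChar_dichotomy hx with hχ | hχ
    · exact (hassoc w (hunscale (quadMap_mul_of_eq_one hχ))).elim
    · exact (hassoc' w (hunscale (quadMap_mul_of_eq_neg_one hχ))).elim

theorem quadraticChar_neg_one_eq_one (h4 : Fintype.card K % 4 = 1) :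
    quadraticChar K (-1) = 1 :=
  (quadraticChar_one_iff_isSquare (neg_ne_zero.2 one_ne_zero)).2
    (FiniteField.isSquare_neg_one_iff.2 (by omega))

theorem IsAdmissible.isMaxNonassocOrder {K : Type} [Field K] [Fintype K] [DecidableEq K] {a : K}
    (ha : IsAdmissible a) (h4 : Fintype.card K % 4 = 1) :
    IsMaxNonassocOrder (Fintype.card K) := by
  have hneg := quadraticChar_neg_one_eq_one h4
  have hinv : a * a⁻¹ = 1 := mul_inv_cancel₀ ha.ne_zero
  have hb := ha.of_mul_eq_one hneg hinv
  have hsub : 1 - a ≠ 0 := fun h => by simpa [h] using ha.one_sub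
  rw [← Nat.card_eq_fintype_card]
  exact (isNonassocOrthomorphism_quadMap ha.ne_zero hsub (ha.self.trans hb.self.symm)
    (ha.one_sub.trans hb.one_sub.symm) (not_assocZero_one hneg ha hb hinv)
    (not_assocZero_one hneg hb ha (mul_comm a a⁻¹ ▸ hinv))).isMaxNonassocOrder

end QuadMap

section Stepanov

open Polynomial

theorem eq_zero_of_sq_mul_associated_sq {R : Type*} [CommMonoidWithZero R]
    [UniqueFactorizationMonoid R] {f r s : R} (hf : Squarefree f) (hunit : ¬IsUnit f)
    (h : Associated (r ^ 2 * f) (s ^ 2)) : r = 0 := by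
  rcases subsingleton_or_nontrivial R with hR | hR
  · exact Subsingleton.elim r 0
  by_contra hr
  obtain ⟨π, hirr, hπf⟩ := WfDvdMonoid.exists_irreducible_factor hunit hf.ne_zero
  have hπ : Prime π := hirr.prime
  have hf_one : emultiplicity π f = 1 :=
    le_antisymm (((squarefree_iff_emultiplicity_le_one f).1 hf π).resolve_right hirr.not_isUnit)
      (le_emultiplicity_of_pow_dvd (by rwa [pow_one]))
  have hr_fin : FiniteMultiplicity π r := FiniteMultiplicity.of_prime_left hπ hr
  have hparity : 2 * emultiplicity π r + 1 = 2 * emultiplicity π s := by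
    have := emultiplicity_eq_of_associated_right (a := π) h
    rwa [emultiplicity_mul hπ, emultiplicity_pow hπ, emultiplicity_pow hπ, hf_one] at this
  rw [hr_fin.emultiplicity_eq_multiplicity] at hparity
  cases hs : emultiplicity π s with
  | top => exact ENat.natCast_ne_top (2 * multiplicity π r) (by simpa [hs] using hparity)
  | coe n =>
    rw [hs] at hparity
    norm_cast at hparity
    omega

theorem squarefree_mulEquiv_apply {M N : Type*} [Monoid M] [Monoid N] (e : M ≃* N) {f : M}
    (hf : Squarefree f) : Squarefree (e f) := by
  intro u hu
  have hdvd : e.symm u * e.symm u ∣ f := by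
    rw [← map_mul]
    simpa only [MulEquiv.symm_apply_apply] using map_dvd e.symm hu
  exact (MulEquiv.isUnit_map e.symm).1 (hf _ hdvd)

section TwistedDeriv

variable {K : Type*} [Field K] (f : K[X]) (c : K)

/-- The operator `u ↦ f * D u + c * D f * u` for `D = d/dX`, formally
`u ↦ f ^ (1 - c) * D (f ^ c * u)`. -/
noncomputable def twistedDeriv : K[X] →ₗ[K] K[X] :=
  LinearMap.mulLeft K f ∘ₗ derivative + LinearMap.mulLeft K (C c * derivative f)

theorem twistedDeriv_apply (u : K[X]) :
    twistedDeriv f c u = f * derivative u + C c * derivative f * u :=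
  rfl

/-- Formally `u ↦ f ^ (k - c) * D ^ k (f ^ c * u)`, the `k`-th
derivative cleared of denominators. -/
noncomputable def twistedDerivIter : ℕ → K[X] →ₗ[K] K[X]
  | 0 => LinearMap.id
  | k + 1 => twistedDeriv f (c - k) ∘ₗ twistedDerivIter k

theorem natDegree_twistedDeriv_le (u : K[X]) :
    (twistedDeriv f c u).natDegree ≤ u.natDegree + (f.natDegree - 1) := by
  rw [twistedDeriv_apply]
  refine natDegree_add_le_of_degree_le ?_ ?_
  · rcases Nat.eq_zero_or_pos u.natDegree with hu | hu
    · rw [derivative_of_natDegree_zero hu, mul_zero, natDegree_zero]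
      exact Nat.zero_le _
    · have := natDegree_mul_le (p := f) (q := derivative u)
      have := natDegree_derivative_le u
      omega
  · have := natDegree_mul_le (p := C c * derivative f) (q := u)
    have := natDegree_C_mul_le c (derivative f)
    have := natDegree_derivative_le f
    omega

theorem natDegree_twistedDerivIter_le (k : ℕ) (u : K[X]) :
    (twistedDerivIter f c k u).natDegree ≤ u.natDegree + k * (f.natDegree - 1) := by
  induction k with
  | zero => simp only [twistedDerivIter, LinearMap.id_apply, zero_mul, add_zero, le_refl]
  | succ k ih =>
    have := natDegree_twistedDeriv_le f (c - k) (twistedDerivIter f c k u)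
    rw [Nat.succ_mul]
    exact this.trans (by omega)

theorem mul_derivative_pow (n : ℕ) :
    f * derivative (f ^ n) = C (n : K) * derivative f * f ^ n := by
  cases n with
  | zero => simp
  | succ n =>
    rw [derivative_pow, Nat.add_sub_cancel]
    ring

theorem pow_succ_mul_iterate_derivative (H : K[X]) (k : ℕ) :
    f ^ (k + 1) * derivative^[k + 1] H = twistedDeriv f (0 - k) (f ^ k * derivative^[k] H) := by
  rw [twistedDeriv_apply, iterate_succ_apply', derivative_mul, zero_sub, C_neg]
  linear_combination derivative^[k] H * (-mul_derivative_pow f k)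

end TwistedDeriv

section StepanovPoly

variable {K : Type*} [Field K] [Fintype K]

/-- Stepanov's auxiliary polynomial. Where `f ^ (q / 2)` takes the constant value `e`, it agrees
with `∑ j, (r j + e * s j) * X ^ j`, which has much smaller degree. -/
noncomputable def stepanovPoly (f : K[X]) {J : ℕ} (r s : Fin J → K[X]) : K[X] :=
  ∑ j, (r j + s j * f ^ (Fintype.card K / 2)) * X ^ (Fintype.card K * j)

theorem eval_stepanovPoly {f : K[X]} {J : ℕ} {r s : Fin J → K[X]} {x e : K}
    (hx : f.eval x ^ (Fintype.card K / 2) = e) :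
    (stepanovPoly f r s).eval x = (∑ j, (r j + C e * s j) * X ^ (j : ℕ)).eval x := by
  simp only [stepanovPoly, eval_finsetSum, eval_mul, eval_add, eval_pow, eval_X, eval_C, hx,
    pow_mul, FiniteField.pow_card, mul_comm e]

theorem twistedDeriv_stepanovPoly (f : K[X]) (c : K) {J : ℕ} (r s : Fin J → K[X]) :
    twistedDeriv f c (stepanovPoly f r s) =
      stepanovPoly f (fun j => twistedDeriv f c (r j))
        (fun j => twistedDeriv f ((Fintype.card K / 2 : ℕ) + c) (s j)) := by
  simp only [stepanovPoly, map_sum]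
  refine Finset.sum_congr rfl fun j _ => ?_
  have hX : derivative (X ^ (Fintype.card K * j) : K[X]) = 0 := by
    simp [derivative_X_pow, Nat.cast_card_eq_zero]
  simp only [twistedDeriv_apply, derivative_mul, derivative_add, hX, C_add]
  linear_combination
    (s j * X ^ (Fintype.card K * j)) * mul_derivative_pow f (Fintype.card K / 2)

theorem pow_mul_iterate_derivative_stepanovPoly (f : K[X]) {J : ℕ} (r s : Fin J → K[X])
    (k : ℕ) :
    f ^ k * derivative^[k] (stepanovPoly f r s) =
      stepanovPoly f (fun j => twistedDerivIter f 0 k (r j))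
        (fun j => twistedDerivIter f (Fintype.card K / 2 : ℕ) k (s j)) := by
  induction k with
  | zero => simp [twistedDerivIter]
  | succ k ih =>
    rw [pow_succ_mul_iterate_derivative, ih, twistedDeriv_stepanovPoly]
    simp only [twistedDerivIter, LinearMap.comp_apply, sub_eq_add_neg, zero_add]

theorem natDegree_stepanovPoly_le (f : K[X]) {J d : ℕ} {r s : Fin J → K[X]}
    (hr : ∀ j, (r j).natDegree ≤ d) (hs : ∀ j, (s j).natDegree ≤ d) :
    (stepanovPoly f r s).natDegree ≤
      d + f.natDegree * (Fintype.card K / 2) + Fintype.card K * (J - 1) := by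
  refine natDegree_sum_le_of_forall_le _ _ fun j _ => natDegree_mul_le.trans ?_
  rw [natDegree_X_pow]
  refine Nat.add_le_add ?_ (Nat.mul_le_mul_left _ (by omega))
  refine natDegree_add_le_of_degree_le ((hr j).trans (Nat.le_add_right _ _)) ?_
  refine natDegree_mul_le.trans (Nat.add_le_add (hs j) ?_)
  rw [mul_comm]
  exact natDegree_pow_le

theorem X_pow_dvd_of_X_pow_dvd_add_mul_pow (hchar : ringChar K ≠ 2) {f r s : K[X]}
    (h : X ^ Fintype.card K ∣ r + s * f ^ (Fintype.card K / 2)) :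
    X ^ Fintype.card K ∣ r ^ 2 * f - C (f.coeff 0) * s ^ 2 := by
  have hpow : f * (f ^ (Fintype.card K / 2)) ^ 2 = expand K (Fintype.card K) f := by
    have hodd := FiniteField.odd_card_of_char_ne_two hchar
    rw [FiniteField.expand_card, ← pow_mul, ← pow_succ']
    congr 1
    omega
  have hexpand : X ^ Fintype.card K ∣ expand K (Fintype.card K) f - C (f.coeff 0) := by
    have hdvd : X ∣ f - C (f.coeff 0) := by
      rw [X_dvd_iff, coeff_sub, coeff_C_zero, sub_self]
    simpa only [expand_X, map_sub, expand_C] using map_dvd (expand K (Fintype.card K)) hdvd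
  have hsplit : r ^ 2 * f - C (f.coeff 0) * s ^ 2 =
      (r + s * f ^ (Fintype.card K / 2)) * (f * (r - s * f ^ (Fintype.card K / 2))) +
        s ^ 2 * (expand K (Fintype.card K) f - C (f.coeff 0)) := by
    rw [← hpow]
    ring
  rw [hsplit]
  exact dvd_add (dvd_mul_of_dvd_left h _) (dvd_mul_of_dvd_right hexpand _)

theorem eq_zero_of_X_pow_dvd_add_mul_pow (hchar : ringChar K ≠ 2) {f r s : K[X]}
    (hf : Squarefree f) (hpos : 0 < f.natDegree) (h0 : f.coeff 0 ≠ 0) {d : ℕ}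
    (hd : 2 * d + f.natDegree < Fintype.card K) (hr : r.natDegree ≤ d) (hs : s.natDegree ≤ d)
    (h : X ^ Fintype.card K ∣ r + s * f ^ (Fintype.card K / 2)) : r = 0 ∧ s = 0 := by
  have hdeg : (r ^ 2 * f - C (f.coeff 0) * s ^ 2).natDegree ≤ 2 * d + f.natDegree := by
    refine (natDegree_sub_le _ _).trans (max_le ?_ ?_)
    · exact natDegree_mul_le.trans
        (Nat.add_le_add_right (natDegree_pow_le.trans (Nat.mul_le_mul_left 2 hr)) _)
    · exact (natDegree_C_mul_le _ _).trans ((natDegree_pow_le.trans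
        (Nat.mul_le_mul_left 2 hs)).trans (Nat.le_add_right _ _))
  have hzero : r ^ 2 * f - C (f.coeff 0) * s ^ 2 = 0 := by
    refine eq_zero_of_dvd_of_natDegree_lt (X_pow_dvd_of_X_pow_dvd_add_mul_pow hchar h) ?_
    rw [natDegree_X_pow]
    omega
  have hr0 : r = 0 := by
    refine eq_zero_of_sq_mul_associated_sq hf (fun hu => hpos.ne' (natDegree_eq_zero_of_isUnit hu))
      (s := s) ?_
    rw [sub_eq_zero.1 hzero]
    exact associated_unit_mul_left _ _ (isUnit_C.2 h0.isUnit)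
  exact ⟨hr0, by simpa [hr0, h0] using hzero⟩

theorem eq_zero_of_stepanovPoly_eq_zero (hchar : ringChar K ≠ 2) {f : K[X]} (hf : Squarefree f)
    (hpos : 0 < f.natDegree) (h0 : f.coeff 0 ≠ 0) {d : ℕ}
    (hd : 2 * d + f.natDegree < Fintype.card K) {J : ℕ} {r s : Fin J → K[X]}
    (hr : ∀ j, (r j).natDegree ≤ d) (hs : ∀ j, (s j).natDegree ≤ d)
    (h : stepanovPoly f r s = 0) : r = 0 ∧ s = 0 := by
  induction J with
  | zero => exact ⟨Subsingleton.elim _ _, Subsingleton.elim _ _⟩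
  | succ J ih =>
    have hsplit : stepanovPoly f r s = r 0 + s 0 * f ^ (Fintype.card K / 2) +
        X ^ Fintype.card K * stepanovPoly f (Fin.tail r) (Fin.tail s) := by
      simp only [stepanovPoly, Fin.sum_univ_succ, Finset.mul_sum, Fin.tail, Fin.val_zero,
        Fin.val_succ, mul_zero, pow_zero, mul_one, mul_add, pow_add]
      exact congrArg _ (Finset.sum_congr rfl fun j _ => by ring)
    rw [hsplit] at h
    obtain ⟨hr0, hs0⟩ := eq_zero_of_X_pow_dvd_add_mul_pow hchar hf hpos h0 hd (hr 0) (hs 0)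
      ⟨-stepanovPoly f (Fin.tail r) (Fin.tail s), by linear_combination h⟩
    rw [hr0, hs0, zero_mul, add_zero, zero_add] at h
    obtain ⟨hr', hs'⟩ := ih (r := Fin.tail r) (s := Fin.tail s) (fun j => hr j.succ)
      (fun j => hs j.succ) ((mul_eq_zero.1 h).resolve_left (pow_ne_zero _ X_ne_zero))
    constructor <;> funext j <;> cases j using Fin.cases
    exacts [hr0, congrFun hr' _, hs0, congrFun hs' _]

end StepanovPoly

theorem exists_ne_zero_forall_apply_eq_zero {K V W ι : Type*} [Field K] [AddCommGroup V]
    [Module K V] [AddCommGroup W] [Module K W] [Fintype ι] (φ : ι → V →ₗ[K] W)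
    (U : ι → Submodule K W) [∀ i, FiniteDimensional K (U i)] (hφ : ∀ i v, φ i v ∈ U i)
    (hrank : ∑ i, Module.finrank K (U i) < Module.finrank K V) :
    ∃ v, v ≠ 0 ∧ ∀ i, φ i v = 0 := by
  have : FiniteDimensional K V := Module.finite_of_finrank_pos (Nat.zero_le _ |>.trans_lt hrank)
  let Φ : V →ₗ[K] ∀ i, U i := LinearMap.pi fun i => (φ i).codRestrict (U i) (hφ i)
  have hker : LinearMap.ker Φ ≠ ⊥ :=
    LinearMap.ker_ne_bot_of_finrank_lt (by rwa [Module.finrank_pi_fintype])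
  obtain ⟨v, hv, hv0⟩ := Submodule.exists_mem_ne_zero_of_ne_bot hker
  exact ⟨v, hv0, fun i => congrArg Subtype.val (congrFun (LinearMap.mem_ker.1 hv) i)⟩

section Polynomials

variable {K : Type*} [Field K]

theorem finrank_degreeLT (n : ℕ) : Module.finrank K (degreeLT K n) = n := by
  rw [(degreeLTEquiv K n).finrank_eq, Module.finrank_fin_fun]

theorem natDegree_le_of_mem_degreeLT_succ {u : K[X]} {d : ℕ} (hu : u ∈ degreeLT K (d + 1)) :
    u.natDegree ≤ d := by
  rwa [degreeLT_succ_eq_degreeLE, mem_degreeLE, ← natDegree_le_iff_degree_le] at hu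

theorem sum_mul_X_pow_mem_degreeLT {n J : ℕ} {u : Fin J → K[X]}
    (hu : ∀ j, (u j).natDegree ≤ n) : ∑ j, u j * X ^ (j : ℕ) ∈ degreeLT K (n + J) := by
  refine Submodule.sum_mem _ fun j _ => mem_degreeLT.2 (degree_le_natDegree.trans_lt ?_)
  have hmul := natDegree_mul_le (p := u j) (q := X ^ (j : ℕ))
  rw [natDegree_X_pow] at hmul
  have := hu j
  exact Nat.cast_lt.2 (by omega)

-- The conditions of order `k < M` become `d + k (deg f - 1) + J` linear equations for the
-- `2 J (d + 1)` coefficients of `r` and `s`.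
theorem exists_twistedDerivIter_sum_eq_zero (f : K[X]) (c e : K) {M J d : ℕ}
    (hcount : ∑ k ∈ Finset.range M, (d + k * (f.natDegree - 1) + J) < 2 * J * (d + 1)) :
    ∃ r s : Fin J → K[X], (∀ j, (r j).natDegree ≤ d) ∧ (∀ j, (s j).natDegree ≤ d) ∧
      ¬(r = 0 ∧ s = 0) ∧ ∀ k < M, ∑ j : Fin J,
        (twistedDerivIter f 0 k (r j) + C e * twistedDerivIter f c k (s j)) * X ^ (j : ℕ) = 0 := by
  let φ (k : Fin M) :
      (Fin J → degreeLT K (d + 1)) × (Fin J → degreeLT K (d + 1)) →ₗ[K] K[X] := {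
    toFun v := ∑ j : Fin J, (twistedDerivIter f 0 k (v.1 j) +
      C e * twistedDerivIter f c k (v.2 j)) * X ^ (j : ℕ)
    map_add' v w := by
      rw [← Finset.sum_add_distrib]
      refine Finset.sum_congr rfl fun j _ => ?_
      simp only [Prod.fst_add, Prod.snd_add, Pi.add_apply, Submodule.coe_add, map_add]
      ring
    map_smul' t v := by
      simp only [Prod.smul_fst, Prod.smul_snd, Pi.smul_apply, Submodule.coe_smul, map_smul,
        RingHom.id_apply, Finset.smul_sum]
      refine Finset.sum_congr rfl fun j _ => ?_
      simp only [smul_eq_C_mul]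
      ring }
  have hφ (k : Fin M) v : φ k v ∈ degreeLT K (d + k * (f.natDegree - 1) + J) := by
    refine sum_mul_X_pow_mem_degreeLT fun j => natDegree_add_le_of_degree_le ?_
      ((natDegree_C_mul_le _ _).trans ?_) <;>
    refine (natDegree_twistedDerivIter_le f _ k _).trans (Nat.add_le_add_right ?_ _)
    exacts [natDegree_le_of_mem_degreeLT_succ (v.1 j).2,
      natDegree_le_of_mem_degreeLT_succ (v.2 j).2]
  obtain ⟨v, hv, hφv⟩ := exists_ne_zero_forall_apply_eq_zero φ
    (fun k => degreeLT K (d + k * (f.natDegree - 1) + J)) hφ (by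
      simp only [Module.finrank_prod, Module.finrank_pi_fintype, finrank_degreeLT,
        Finset.sum_const, Finset.card_univ, Fintype.card_fin, smul_eq_mul,
        Fin.sum_univ_eq_sum_range (fun k => d + k * (f.natDegree - 1) + J)]
      linarith)
  refine ⟨fun j => v.1 j, fun j => v.2 j,
    fun j => natDegree_le_of_mem_degreeLT_succ (v.1 j).2,
    fun j => natDegree_le_of_mem_degreeLT_succ (v.2 j).2, fun ⟨hr, hs⟩ => hv ?_,
    fun k hk => hφv ⟨k, hk⟩⟩
  exact Prod.ext (funext fun j => Subtype.ext (congrFun hr j))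
    (funext fun j => Subtype.ext (congrFun hs j))

theorem le_rootMultiplicity_of_iterate_derivative {p : K[X]} (hp : p ≠ 0) {x : K} {M : ℕ}
    (hM : M ≤ ringChar K) (h : ∀ k < M, (derivative^[k] p).eval x = 0) :
    M ≤ p.rootMultiplicity x := by
  rcases M with _ | n
  · exact Nat.zero_le _
  refine lt_rootMultiplicity_of_isRoot_iterate_derivative_of_mem_nonZeroDivisors' hp
    (fun k hk => h k (by omega)) fun k hk hk0 => mem_nonZeroDivisors_of_ne_zero fun hzero => ?_
  have := Nat.le_of_dvd (Nat.pos_of_ne_zero hk0) ((ringChar.spec K k).1 hzero)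
  omega

theorem card_mul_le_natDegree {p : K[X]} {S : Finset K} {M : ℕ}
    (h : ∀ x ∈ S, M ≤ p.rootMultiplicity x) : S.card * M ≤ p.natDegree := by
  classical
  calc S.card * M ≤ ∑ x ∈ S, p.rootMultiplicity x := by
        rw [← smul_eq_mul]
        exact Finset.card_nsmul_le_sum _ _ _ h
    _ = ∑ x ∈ S, p.roots.count x := by simp only [count_roots]
    _ ≤ ∑ x ∈ p.roots.toFinset, p.roots.count x :=
        Finset.sum_le_sum_of_ne_zero fun x _ hx =>
          Multiset.mem_toFinset.2 (Multiset.count_ne_zero.1 hx)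
    _ = p.roots.card := Multiset.toFinset_sum_count_eq _
    _ ≤ p.natDegree := card_roots' p

end Polynomials

section CharSum

variable {K : Type*} [Field K] [Fintype K] {f : K[X]}

theorem card_mul_le_of_eval_pow_eq (hchar : ringChar K ≠ 2) (hf : Squarefree f)
    (hpos : 0 < f.natDegree) (h0 : f.coeff 0 ≠ 0) {e : K} (he : e ≠ 0) {M J d : ℕ}
    (hM : M ≤ ringChar K) (hd : 2 * d + f.natDegree < Fintype.card K)
    (hcount : ∑ k ∈ Finset.range M, (d + k * (f.natDegree - 1) + J) < 2 * J * (d + 1))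
    {S : Finset K} (hS : ∀ x ∈ S, f.eval x ^ (Fintype.card K / 2) = e) :
    S.card * M ≤ d + f.natDegree * (Fintype.card K / 2) + Fintype.card K * (J - 1) := by
  obtain ⟨r, s, hr, hs, hne, hvanish⟩ :=
    exists_twistedDerivIter_sum_eq_zero f (Fintype.card K / 2 : ℕ) e hcount
  have hH : stepanovPoly f r s ≠ 0 :=
    fun h => hne (eq_zero_of_stepanovPoly_eq_zero hchar hf hpos h0 hd hr hs h)
  refine (card_mul_le_natDegree fun x hx => ?_).trans (natDegree_stepanovPoly_le f hr hs)
  refine le_rootMultiplicity_of_iterate_derivative hH hM fun k hk => ?_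
  have hfx : f.eval x ≠ 0 := by
    intro hzero
    have hhalf : Fintype.card K / 2 ≠ 0 := (Nat.div_pos Fintype.one_lt_card two_pos).ne'
    exact he (by rw [← hS x hx, hzero, zero_pow hhalf])
  have hmul := congrArg (Polynomial.eval x) (pow_mul_iterate_derivative_stepanovPoly f r s k)
  rw [eval_stepanovPoly (hS x hx), hvanish k hk, eval_zero, eval_mul, eval_pow] at hmul
  exact (mul_eq_zero.1 hmul).resolve_left (pow_ne_zero k hfx)

theorem stepanov_parameters_count {q m M J d : ℕ} (hm : 0 < m) (hM : m + 2 ≤ M)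
    (hMq : M * M ≤ q) (hd : q ≤ 2 * d + m + 2) (hJ : M + m + 1 ≤ 2 * J)
    (hJ' : 2 * J ≤ M + m + 2) :
    ∑ k ∈ Finset.range M, (d + k * (m - 1) + J) < 2 * J * (d + 1) := by
  have hsum : ∑ k ∈ Finset.range M, (d + k * (m - 1) + J) =
      M * d + (∑ k ∈ Finset.range M, k) * (m - 1) + M * J := by
    simp only [Finset.sum_add_distrib, Finset.sum_mul, Finset.sum_const, Finset.card_range,
      smul_eq_mul]
  have hgauss := Finset.sum_range_id_mul_two M
  rw [hsum]
  generalize ∑ k ∈ Finset.range M, k = T at hgauss ⊢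
  obtain ⟨n, rfl⟩ := Nat.exists_eq_add_of_le' hm
  obtain ⟨L, rfl⟩ := Nat.exists_eq_add_of_le' (show 1 ≤ M by omega)
  simp only [Nat.add_sub_cancel] at hgauss ⊢
  zify at *
  have hmain : (n + 2 : ℤ) * (q - (n + 1)) ≤ (2 * J - (L + 1)) * (2 * d + 2) :=
    mul_le_mul (by linarith) (by linarith) (by nlinarith) (by linarith)
  nlinarith

theorem two_mul_card_quadraticChar_eq_le [DecidableEq K] (hf : Squarefree f)
    (hpos : 0 < f.natDegree) (h0 : f.coeff 0 ≠ 0)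
    (hcard : Fintype.card K ≤ ringChar K ^ 2) (hsqrt : f.natDegree + 2 ≤ (Fintype.card K).sqrt)
    {ε : ℤ} (hε : ε = 1 ∨ ε = -1) :
    2 * (Finset.univ.filter fun x => quadraticChar K (f.eval x) = ε).card ≤
      Fintype.card K + (2 * f.natDegree + 1) * ((Fintype.card K).sqrt + 2) := by
  set q := Fintype.card K
  set m := f.natDegree
  set M := q.sqrt
  set N := (Finset.univ.filter fun x => quadraticChar K (f.eval x) = ε).card
  have hMq : M * M ≤ q := Nat.sqrt_le q
  have hqM : q ≤ M * (M + 2) := by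
    have := Nat.sqrt_le_add q
    linarith
  have hmq : m + 1 ≤ q := by nlinarith
  have hM : M ≤ ringChar K := by
    simpa only [Nat.sqrt_eq'] using Nat.sqrt_le_sqrt hcard
  have hchar : ringChar K ≠ 2 := by omega
  have hε0 : (ε : K) ≠ 0 := by rcases hε with rfl | rfl <;> simp
  have hbound : N * M ≤ (q - 1 - m) / 2 + m * (q / 2) + q * ((M + m) / 2 + 1 - 1) :=
    card_mul_le_of_eval_pow_eq hchar hf hpos h0 hε0 hM (by omega)
      (stepanov_parameters_count hpos hsqrt hMq (by omega) (by omega) (by omega)) fun x hx => by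
        rw [← quadraticChar_eq_pow_of_char_ne_two' hchar, (Finset.mem_filter.1 hx).2]
  have hdouble : M * (2 * N) ≤ M * (q + (2 * m + 1) * (M + 2)) := by
    have := Nat.div_mul_le_self (q - 1 - m) 2
    have := Nat.mul_le_mul_left m (Nat.div_mul_le_self q 2)
    have := Nat.mul_le_mul_left q (Nat.div_mul_le_self (M + m) 2)
    have := Nat.mul_le_mul_left (2 * m + 1) hqM
    rw [Nat.add_sub_cancel] at hbound
    have : q - 1 - m ≤ q := by omega
    nlinarith
  exact Nat.le_of_mul_le_mul_left hdouble (by omega)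

theorem card_filter_eval_eq_zero_le [DecidableEq K] (hf : f ≠ 0) :
    (Finset.univ.filter fun x => f.eval x = 0).card ≤ f.natDegree := by
  rw [← mul_one (Finset.card _)]
  exact card_mul_le_natDegree fun x hx => (rootMultiplicity_pos hf).2 (Finset.mem_filter.1 hx).2

theorem abs_sum_quadraticChar_le_of_coeff_zero_ne_zero [DecidableEq K] (hf : Squarefree f)
    (hpos : 0 < f.natDegree) (h0 : f.coeff 0 ≠ 0)
    (hcard : Fintype.card K ≤ ringChar K ^ 2)
    (hsqrt : f.natDegree + 2 ≤ (Fintype.card K).sqrt) :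
    |∑ x, quadraticChar K (f.eval x)| ≤
      (2 * f.natDegree + 1) * ((Fintype.card K).sqrt + 2) + f.natDegree := by
  have hsign {ε : ℤ} (hε : ε = 1 ∨ ε = -1) : ε * ∑ x, quadraticChar K (f.eval x) ≤
      (2 * f.natDegree + 1) * ((Fintype.card K).sqrt + 2) + f.natDegree := by
    have hpoint (x : K) : ε * quadraticChar K (f.eval x) =
        2 * (if quadraticChar K (f.eval x) = ε then 1 else 0) +
          (if f.eval x = 0 then 1 else 0) - 1 := by
      by_cases hx : f.eval x = 0
      · rcases hε with rfl | rfl <;> simp [hx]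
      · rcases hε with rfl | rfl <;> rcases quadraticChar_dichotomy hx with h | h <;>
          simp [-quadraticChar_apply, hx, h]
    have hcount := two_mul_card_quadraticChar_eq_le hf hpos h0 hcard hsqrt hε
    have hroots := card_filter_eval_eq_zero_le hf.ne_zero
    rw [Finset.mul_sum, Finset.sum_congr rfl fun x _ => hpoint x, Finset.sum_sub_distrib,
      Finset.sum_add_distrib, ← Finset.mul_sum, Finset.sum_boole, Finset.sum_boole,
      Finset.sum_const, Finset.card_univ, nsmul_one]
    zify at hcount hroots
    linarith
  exact abs_le'.2 ⟨by simpa only [one_mul] using hsign (.inl rfl),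
    by simpa only [neg_one_mul] using hsign (.inr rfl)⟩

theorem abs_sum_quadraticChar_le [DecidableEq K] (hf : Squarefree f)
    (hpos : 0 < f.natDegree) (hcard : Fintype.card K ≤ ringChar K ^ 2)
    (hsqrt : f.natDegree + 2 ≤ (Fintype.card K).sqrt) :
    |∑ x, quadraticChar K (f.eval x)| ≤
      (2 * f.natDegree + 1) * ((Fintype.card K).sqrt + 2) + f.natDegree := by
  obtain ⟨t, ht⟩ : ∃ t, f.eval t ≠ 0 := by
    refine exists_eval_ne_zero_of_natDegree_lt_card f hf.ne_zero ?_
    have := Nat.sqrt_le_self (Fintype.card K)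
    rw [Cardinal.mk_fintype]
    exact_mod_cast (by omega : f.natDegree < Fintype.card K)
  have hshift : ∑ x, quadraticChar K ((taylor t f).eval x) = ∑ x, quadraticChar K (f.eval x) := by
    simp only [taylor_eval]
    exact Equiv.sum_comp (Equiv.addRight t) fun x => quadraticChar K (f.eval x)
  have hbound := abs_sum_quadraticChar_le_of_coeff_zero_ne_zero (f := taylor t f)
    (squarefree_mulEquiv_apply (taylorEquiv t : K[X] ≃* K[X]) hf)
    (by rwa [natDegree_taylor]) (by rwa [taylor_coeff_zero]) hcard (by rwa [natDegree_taylor])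
  rwa [hshift, natDegree_taylor] at hbound

end CharSum

theorem two_mul_sum_finset_sum {ι : Type*} [Fintype ι] (d : ι → ℕ) :
    2 * ∑ S : Finset ι, ∑ i ∈ S, d i = 2 ^ Fintype.card ι * ∑ i, d i := by
  classical
  calc 2 * ∑ S : Finset ι, ∑ i ∈ S, d i
      = ∑ S : Finset ι, (∑ i ∈ S, d i + ∑ i ∈ Sᶜ, d i) := by
        rw [Finset.sum_add_distrib,
          compl_involutive.bijective.sum_comp fun S : Finset ι => ∑ i ∈ S, d i, two_mul]
    _ = 2 ^ Fintype.card ι * ∑ i, d i := by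
        simp only [Finset.sum_add_sum_compl, Finset.sum_const, Finset.card_univ,
          Fintype.card_finset, smul_eq_mul]

section Signs

variable {K ι : Type*} [Field K] [Fintype K] [DecidableEq K] {F : ι → K[X]} {ε : ι → ℤ}

theorem neg_le_prod_mul_sum_quadraticChar (hcard : Fintype.card K ≤ ringChar K ^ 2)
    (hF : ∀ i, Squarefree (F i)) (hpos : ∀ i, 0 < (F i).natDegree)
    (hcop : Pairwise fun i j => IsCoprime (F i) (F j)) (hε : ∀ i, ε i = 1 ∨ ε i = -1)
    {S : Finset ι} (hS : S.Nonempty)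
    (hsqrt : ∑ i ∈ S, (F i).natDegree + 2 ≤ (Fintype.card K).sqrt) :
    -((2 * (∑ i ∈ S, (F i).natDegree : ℕ) + 1) * ((Fintype.card K).sqrt + 2 : ℤ) +
        (∑ i ∈ S, (F i).natDegree : ℕ)) ≤
      (∏ i ∈ S, ε i) * ∑ x, quadraticChar K ((∏ i ∈ S, F i).eval x) := by
  have hdeg : (∏ i ∈ S, F i).natDegree = ∑ i ∈ S, (F i).natDegree :=
    natDegree_prod _ _ fun i _ => (hF i).ne_zero
  have hunit : |∏ i ∈ S, ε i| = 1 := by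
    rw [Finset.abs_prod]
    exact Finset.prod_eq_one fun i _ => by rcases hε i with h | h <;> simp [h]
  have hbound := abs_sum_quadraticChar_le (f := ∏ i ∈ S, F i)
    (Finset.squarefree_prod_of_pairwise_isCoprime
      (fun i _ j _ hij => (hcop hij).isRelPrime) fun i _ => hF i)
    (hdeg ▸ Finset.sum_pos (fun i _ => hpos i) hS) hcard (by rwa [hdeg])
  rw [hdeg] at hbound
  refine (abs_le.1 (le_trans (le_of_eq ?_) hbound)).1
  rw [abs_mul, hunit, one_mul]

variable [Fintype ι]

theorem sum_prod_one_add_mul_quadraticChar :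
    ∑ x, ∏ i, (1 + ε i * quadraticChar K ((F i).eval x)) =
      ∑ S : Finset ι, (∏ i ∈ S, ε i) * ∑ x, quadraticChar K ((∏ i ∈ S, F i).eval x) := by
  classical
  simp_rw [Finset.prod_one_add, Finset.mul_sum]
  rw [Finset.sum_comm, Finset.powerset_univ]
  refine Finset.sum_congr rfl fun S _ => Finset.sum_congr rfl fun x _ => ?_
  rw [Finset.prod_mul_distrib, eval_prod, map_prod]

theorem sum_prod_one_add_le (hF : ∀ i, F i ≠ 0) (hε : ∀ i, ε i = 1 ∨ ε i = -1)
    (h : ∀ x, ∃ i, quadraticChar K ((F i).eval x) ≠ ε i) :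
    ∑ x, ∏ i, (1 + ε i * quadraticChar K ((F i).eval x)) ≤
      2 ^ Fintype.card ι * (∑ i, (F i).natDegree : ℕ) := by
  have hpoint (x : K) : ∏ i, (1 + ε i * quadraticChar K ((F i).eval x)) ≤
      2 ^ Fintype.card ι * (if (∏ i, F i).eval x = 0 then 1 else 0) := by
    have hfactor (i : ι) : 0 ≤ 1 + ε i * quadraticChar K ((F i).eval x) ∧
        1 + ε i * quadraticChar K ((F i).eval x) ≤ 2 := by
      by_cases hx : (F i).eval x = 0
      · simp [hx]
      · rcases hε i with h | h <;> rcases quadraticChar_dichotomy hx with h' | h' <;>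
          simp [-quadraticChar_apply, h, h']
    split_ifs with hx
    · rw [mul_one, ← Finset.card_univ, ← Finset.prod_const]
      exact Finset.prod_le_prod (fun i _ => (hfactor i).1) fun i _ => (hfactor i).2
    · obtain ⟨i, hi⟩ := h x
      rw [eval_prod, ← ne_eq, Finset.prod_ne_zero_iff] at hx
      rw [mul_zero, Finset.prod_eq_zero (Finset.mem_univ i)]
      rcases hε i with h | h <;>
        rcases quadraticChar_dichotomy (hx i (Finset.mem_univ i)) with h' | h' <;> simp_all
  refine (Finset.sum_le_sum fun x _ => hpoint x).trans ?_
  rw [← Finset.mul_sum, Finset.sum_boole]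
  have hroots := card_filter_eval_eq_zero_le (f := ∏ i, F i)
    (Finset.prod_ne_zero_iff.2 fun i _ => hF i)
  rw [natDegree_prod _ _ fun i _ => hF i] at hroots
  exact mul_le_mul_of_nonneg_left (by exact_mod_cast hroots) (by positivity)

theorem le_sum_prod_one_add (hcard : Fintype.card K ≤ ringChar K ^ 2)
    (hF : ∀ i, Squarefree (F i)) (hpos : ∀ i, 0 < (F i).natDegree)
    (hcop : Pairwise fun i j => IsCoprime (F i) (F j)) (hε : ∀ i, ε i = 1 ∨ ε i = -1)
    (hsqrt : ∑ i, (F i).natDegree + 2 ≤ (Fintype.card K).sqrt) :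
    (Fintype.card K : ℤ) - 2 ^ Fintype.card ι * (((∑ i, (F i).natDegree : ℕ) + 1) *
        ((Fintype.card K).sqrt + 2) + (∑ i, (F i).natDegree : ℕ)) ≤
      ∑ x, ∏ i, (1 + ε i * quadraticChar K ((F i).eval x)) := by
  classical
  set B : ℤ := (Fintype.card K).sqrt + 2
  let d (S : Finset ι) : ℕ := ∑ i ∈ S, (F i).natDegree
  have hB : 0 ≤ B := by positivity
  have hterm (S : Finset ι) :
      (if S = ∅ then (Fintype.card K : ℤ) else 0) - ((2 * B + 1) * d S + B) ≤
        (∏ i ∈ S, ε i) * ∑ x, quadraticChar K ((∏ i ∈ S, F i).eval x) := by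
    split_ifs with hS
    · subst hS
      simpa [d] using hB
    · have hle : d S ≤ ∑ i, (F i).natDegree := Finset.sum_le_univ_sum_of_nonneg fun i => zero_le
      have := neg_le_prod_mul_sum_quadraticChar hcard hF hpos hcop hε
        (Finset.nonempty_iff_ne_empty.2 hS) (le_trans (Nat.add_le_add_right hle 2) hsqrt)
      linarith
  have hdouble : 2 * ∑ S, (d S : ℤ) = 2 ^ Fintype.card ι * (∑ i, (F i).natDegree : ℕ) :=
    mod_cast two_mul_sum_finset_sum fun i => (F i).natDegree
  have hd : 0 ≤ ∑ S, (d S : ℤ) := by positivity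
  rw [sum_prod_one_add_mul_quadraticChar]
  refine le_trans ?_ (Finset.sum_le_sum fun S _ => hterm S)
  rw [Finset.sum_sub_distrib, Finset.sum_ite_eq' Finset.univ, if_pos (Finset.mem_univ _),
    Finset.sum_add_distrib, ← Finset.mul_sum, Finset.sum_const, Finset.card_univ,
    Fintype.card_finset, nsmul_eq_mul, Nat.cast_pow, Nat.cast_two]
  linear_combination (B + 1) * hdouble + hd

theorem exists_forall_quadraticChar_eval_eq (hcard : Fintype.card K ≤ ringChar K ^ 2)
    (hF : ∀ i, Squarefree (F i)) (hpos : ∀ i, 0 < (F i).natDegree)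
    (hcop : Pairwise fun i j => IsCoprime (F i) (F j)) (hε : ∀ i, ε i = 1 ∨ ε i = -1)
    (hlarge : 2 ^ Fintype.card ι * ((∑ i, (F i).natDegree + 1) * ((Fintype.card K).sqrt + 2) +
      2 * ∑ i, (F i).natDegree) < Fintype.card K) :
    ∃ x, ∀ i, quadraticChar K ((F i).eval x) = ε i := by
  by_contra! h
  have hsqrt : ∑ i, (F i).natDegree + 2 ≤ (Fintype.card K).sqrt := by
    by_contra! hlt
    refine hlarge.not_ge ?_
    calc Fintype.card K
        ≤ (Fintype.card K).sqrt * ((Fintype.card K).sqrt + 2) := by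
          linarith [Nat.sqrt_le_add (Fintype.card K)]
      _ ≤ (∑ i, (F i).natDegree + 1) * ((Fintype.card K).sqrt + 2) := by gcongr; omega
      _ ≤ (∑ i, (F i).natDegree + 1) * ((Fintype.card K).sqrt + 2) +
            2 * ∑ i, (F i).natDegree := Nat.le_add_right _ _
      _ ≤ _ := Nat.le_mul_of_pos_left _ (by positivity)
  have hupper := sum_prod_one_add_le (fun i => (hF i).ne_zero) hε h
  have hlower := le_sum_prod_one_add hcard hF hpos hcop hε hsqrt
  generalize ∑ i, (F i).natDegree = D at *
  zify at hlarge
  linarith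

end Signs

end Stepanov

section Large

open Polynomial

variable {K : Type*} [Field K]

theorem squarefree_of_discrim_eq_C {f : K[X]} {D : K} (hD : D ≠ 0)
    (h : derivative f ^ 2 - 4 * f = C D) : Squarefree f := by
  have hinv : C D⁻¹ * C D = 1 := by rw [← C_mul, inv_mul_cancel₀ hD, C_1]
  exact Separable.squarefree
    ⟨-4 * C D⁻¹, C D⁻¹ * derivative f, by linear_combination C D⁻¹ * h + hinv⟩

variable (K) in
/-- The polynomials whose quadratic characters at `a` decide whether `IsAdmissible a`. -/
noncomputable def admissiblePoly : Fin 4 → K[X] :=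
  ![X, 1 - X, X ^ 2 - X - 1, X ^ 2 + X - 1]

theorem natDegree_admissiblePoly (i : Fin 4) :
    (admissiblePoly K i).natDegree = ![1, 1, 2, 2] i := by
  fin_cases i <;> simp only [admissiblePoly] <;> dsimp <;> compute_degree!

theorem squarefree_admissiblePoly (h5 : (5 : K) ≠ 0) (i : Fin 4) :
    Squarefree (admissiblePoly K i) := by
  fin_cases i
  · exact separable_X.squarefree
  · exact Separable.squarefree ⟨0, -1, by simp [admissiblePoly]⟩
  all_goals
    refine squarefree_of_discrim_eq_C h5 ?_
    simp only [admissiblePoly, Fin.reduceFinMk, Matrix.cons_val, derivative_add, derivative_sub,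
      derivative_X_pow, derivative_X, derivative_one, Nat.cast_ofNat, C_ofNat, Nat.reduceSub,
      pow_one]
    ring

theorem pairwise_isCoprime_admissiblePoly (h2 : (2 : K) ≠ 0) :
    Pairwise fun i j => IsCoprime (admissiblePoly K i) (admissiblePoly K j) := by
  have hhalf : C (2⁻¹ : K) * 2 = 1 := by
    rw [← C_ofNat, ← C_mul, inv_mul_cancel₀ h2, C_1]
  refine (Std.Symm.pairwise_on (r := IsCoprime) (admissiblePoly K)).2 fun i j hij => ?_
  fin_cases i <;> fin_cases j <;> first | exact absurd hij (by decide) | skip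
  all_goals simp only [admissiblePoly, Fin.reduceFinMk, Matrix.cons_val]
  · exact ⟨1, 1, by ring⟩
  · exact ⟨X - 1, -1, by ring⟩
  · exact ⟨X + 1, -1, by ring⟩
  · exact ⟨-X, -1, by ring⟩
  · exact ⟨X + 2, 1, by ring⟩
  · exact ⟨-(X - 1) * C 2⁻¹ - 1, (X - 1) * C 2⁻¹, by linear_combination (X - 1) * X * hhalf⟩

theorem exists_isAdmissible_of_large [Fintype K] [DecidableEq K]
    (hcard : Fintype.card K ≤ ringChar K ^ 2) (hlarge : 13456 ≤ Fintype.card K) :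
    ∃ a : K, IsAdmissible a := by
  have hsqrt : 116 ≤ (Fintype.card K).sqrt := Nat.le_sqrt.2 hlarge
  have hchar : 116 ≤ ringChar K := by nlinarith
  have hcast {n : ℕ} (hn : 0 < n) (hn' : n < 116) : (n : K) ≠ 0 := fun h =>
    absurd (Nat.le_of_dvd hn ((ringChar.spec K n).1 h)) (by omega)
  have hdeg : ∑ i, (admissiblePoly K i).natDegree = 6 := by
    simp only [natDegree_admissiblePoly]
    decide
  obtain ⟨a, ha⟩ := exists_forall_quadraticChar_eval_eq (F := admissiblePoly K)
    (ε := ![1, -1, -1, -1]) hcard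
    (squarefree_admissiblePoly (by exact_mod_cast hcast (n := 5) (by decide) (by decide)))
    (fun i => natDegree_admissiblePoly (K := K) i ▸ by fin_cases i <;> decide)
    (pairwise_isCoprime_admissiblePoly (by exact_mod_cast hcast (n := 2) (by decide) (by decide)))
    (by decide) (by
      have := Nat.sqrt_le (Fintype.card K)
      rw [hdeg, Fintype.card_fin]
      nlinarith)
  refine ⟨a, ?_, ?_, ?_, ?_⟩
  · simpa [-quadraticChar_apply, admissiblePoly] using ha 0
  · simpa [-quadraticChar_apply, admissiblePoly] using ha 1
  · simpa [-quadraticChar_apply, admissiblePoly] using ha 2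
  · simpa [-quadraticChar_apply, admissiblePoly] using ha 3

end Large

section Euler

variable {K : Type*} [Field K] {p : ℕ}

/-- By Euler's criterion, `n₀` is a quadratic residue modulo the odd prime `p` while `n₁`, `n₂`
and `n₃` are nonresidues. The statement is decidable by fast natural number arithmetic. -/
abbrev EulerSigns (p n₀ n₁ n₂ n₃ : ℕ) : Prop :=
  n₀ ^ (p / 2) % p = 1 ∧ n₁ ^ (p / 2) % p = p - 1 ∧ n₂ ^ (p / 2) % p = p - 1 ∧
    n₃ ^ (p / 2) % p = p - 1

theorem natCast_pow_eq_one_of_mod [CharP K p] {n k : ℕ} (h : n ^ k % p = 1) :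
    (n : K) ^ k = 1 := by
  rw [← Nat.cast_pow, CharP.cast_eq_mod K p, h, Nat.cast_one]

theorem natCast_pow_eq_neg_one_of_mod [CharP K p] (hp : 0 < p) {n k : ℕ}
    (h : n ^ k % p = p - 1) : (n : K) ^ k = -1 := by
  rw [← Nat.cast_pow, CharP.cast_eq_mod K p, h, Nat.cast_pred hp, CharP.cast_eq_zero, zero_sub]

variable [Fintype K] [DecidableEq K]

theorem quadraticChar_eq_one_of_pow_eq_one (hchar : ringChar K ≠ 2) {u : K}
    (h : u ^ (Fintype.card K / 2) = 1) : quadraticChar K u = 1 :=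
  Int.cast_injOn_of_ringChar_ne_two hchar (quadraticChar_isQuadratic K u) (by simp) <| by
    rw [quadraticChar_eq_pow_of_char_ne_two' hchar, h, Int.cast_one]

theorem quadraticChar_eq_neg_one_of_pow_eq_neg_one (hchar : ringChar K ≠ 2) {u : K}
    (h : u ^ (Fintype.card K / 2) = -1) : quadraticChar K u = -1 :=
  Int.cast_injOn_of_ringChar_ne_two hchar (quadraticChar_isQuadratic K u) (by simp) <| by
    rw [quadraticChar_eq_pow_of_char_ne_two' hchar, h, Int.cast_neg, Int.cast_one]

theorem EulerSigns.isAdmissible {n₀ n₁ n₂ n₃ : ℕ} (h : EulerSigns p n₀ n₁ n₂ n₃)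
    [CharP K p] (hp : 2 < p) {a : K}
    (h₀ : a ^ (Fintype.card K / 2) = (n₀ : K) ^ (p / 2))
    (h₁ : (1 - a) ^ (Fintype.card K / 2) = (n₁ : K) ^ (p / 2))
    (h₂ : (a ^ 2 - a - 1) ^ (Fintype.card K / 2) = (n₂ : K) ^ (p / 2))
    (h₃ : (a ^ 2 + a - 1) ^ (Fintype.card K / 2) = (n₃ : K) ^ (p / 2)) : IsAdmissible a := by
  have hchar : ringChar K ≠ 2 := ringChar.eq K p ▸ hp.ne'
  have hnonres {u : K} {n : ℕ} (hu : u ^ (Fintype.card K / 2) = (n : K) ^ (p / 2))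
      (hn : n ^ (p / 2) % p = p - 1) : quadraticChar K u = -1 :=
    quadraticChar_eq_neg_one_of_pow_eq_neg_one hchar
      (hu.trans (natCast_pow_eq_neg_one_of_mod (by omega) hn))
  exact ⟨quadraticChar_eq_one_of_pow_eq_one hchar (h₀.trans (natCast_pow_eq_one_of_mod h.1)),
    hnonres h₁ h.2.1, hnonres h₂ h.2.2.1, hnonres h₃ h.2.2.2⟩

end Euler

section SmallPrime

set_option maxRecDepth 100000 in
theorem exists_eulerSigns_of_lt : ∀ p ∈ List.range 13456, p % 4 = 1 → 13 ≤ p → p ≠ 17 → p ≠ 37 →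
    (∃ d ∈ List.range 116, 1 < d ∧ d < p ∧ p % d = 0) ∨
      ∃ b ∈ List.range 100, EulerSigns p (b + 2) (b + 1) (b * b + 3 * b + 1)
        (b * b + 5 * b + 5) := by
  decide +kernel

theorem exists_isAdmissible_zmod_of_lt {p : ℕ} [Fact p.Prime] (hlt : p < 13456) (h4 : p % 4 = 1)
    (h13 : 13 ≤ p) (h17 : p ≠ 17) (h37 : p ≠ 37) : ∃ a : ZMod p, IsAdmissible a := by
  rcases exists_eulerSigns_of_lt p (List.mem_range.2 hlt) h4 h13 h17 h37 with
    ⟨d, -, hd, hdp, hmod⟩ | ⟨b, -, hb⟩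
  · exact absurd Fact.out (Nat.not_prime_of_dvd_of_lt (Nat.dvd_of_mod_eq_zero hmod) hd hdp)
  · have heven : Even (p / 2) := Nat.even_iff.2 (by omega)
    refine ⟨(b + 2 : ℕ), hb.isAdmissible (by omega) ?_ ?_ ?_ ?_⟩ <;> rw [ZMod.card]
    · rw [← heven.neg_pow]
      congr 1
      push_cast
      ring
    all_goals
      congr 1
      push_cast
      ring

end SmallPrime

section SmallPrimeSquare

theorem gaussianInt_map_pow_char {R : Type*} [CommRing R] {p : ℕ} [Fact p.Prime] [CharP R p]
    (h3 : p % 4 = 3) (φ : GaussianInt →+* R) (w : GaussianInt) : φ w ^ p = φ (star w) := by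
  suffices (frobenius R p).comp φ = φ.comp (starRingEnd GaussianInt) from
    RingHom.congr_fun this w
  have hsq : φ Zsqrtd.sqrtd ^ 2 = -1 := by
    rw [sq, ← map_mul, Zsqrtd.dmuld, Int.cast_neg, Int.cast_one, map_neg, map_one]
  have hodd : Odd (p / 2) := Nat.odd_iff.2 (by omega)
  have hp : p = 2 * (p / 2) + 1 := by omega
  refine Zsqrtd.hom_ext _ _ ?_
  have hstar : star (Zsqrtd.sqrtd : GaussianInt) = -Zsqrtd.sqrtd := by
    ext <;> simp
  rw [RingHom.comp_apply, RingHom.comp_apply, frobenius_def, starRingEnd_apply, hstar, map_neg]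
  conv_lhs => rw [hp, pow_succ, pow_mul, hsq, hodd.neg_one_pow, neg_one_mul]

theorem gaussianInt_map_pow_half {R : Type*} [CommRing R] {p : ℕ} [Fact p.Prime] [CharP R p]
    (h3 : p % 4 = 3) (φ : GaussianInt →+* R) (w : GaussianInt) :
    φ w ^ (p ^ 2 / 2) = (w.norm.natAbs : R) ^ (p / 2) := by
  have hexp : p ^ 2 / 2 = (p + 1) * (p / 2) := by
    obtain ⟨k, rfl⟩ : ∃ k, p = 2 * k + 1 := ⟨p / 2, by omega⟩
    rw [show (2 * k + 1) / 2 = k by omega]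
    refine Nat.div_eq_of_lt_le ?_ ?_ <;> nlinarith
  rw [hexp, pow_mul, pow_succ', gaussianInt_map_pow_char h3, ← map_mul, ← Zsqrtd.norm_eq_mul_conj,
    map_intCast, GaussianInt.natCast_natAbs_norm]

theorem exists_eulerSigns_norm_of_lt : ∀ p ∈ List.range 116, p % 4 = 3 →
    (∃ d ∈ List.range 11, 1 < d ∧ d < p ∧ p % d = 0) ∨
      ∃ x ∈ List.range 3, ∃ y ∈ List.range 5, let w : GaussianInt := ⟨x, y⟩
        EulerSigns p w.norm.natAbs (1 - w).norm.natAbs (w ^ 2 - w - 1).norm.natAbs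
          (w ^ 2 + w - 1).norm.natAbs := by
  decide +kernel

theorem exists_isAdmissible_of_card_eq_sq {K : Type*} [Field K] [Fintype K] [DecidableEq K]
    {p : ℕ} [Fact p.Prime] [CharP K p] (hcard : Fintype.card K = p ^ 2) (hlt : p < 116)
    (h3 : p % 4 = 3) : ∃ a : K, IsAdmissible a := by
  rcases exists_eulerSigns_norm_of_lt p (List.mem_range.2 hlt) h3 with
    ⟨d, -, hd, hdp, hmod⟩ | ⟨x, -, y, -, hw⟩
  · exact absurd Fact.out (Nat.not_prime_of_dvd_of_lt (Nat.dvd_of_mod_eq_zero hmod) hd hdp)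
  · obtain ⟨i, hi⟩ : IsSquare (-1 : K) := by
      rw [FiniteField.isSquare_neg_one_iff, hcard, Nat.pow_mod, h3]
      decide
    let φ : GaussianInt →+* K := Zsqrtd.lift ⟨i, by rw [← hi, Int.cast_neg, Int.cast_one]⟩
    refine ⟨φ ⟨x, y⟩, hw.isAdmissible (by omega) ?_ ?_ ?_ ?_⟩ <;>
      rw [hcard, ← gaussianInt_map_pow_half h3 φ] <;>
      simp only [map_sub, map_add, map_pow, map_one]

end SmallPrimeSquare

section SporadicOrders

instance : Fact (Nat.Prime 17) :=
  ⟨by decide⟩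

theorem isMaxNonassocOrder_17 : IsMaxNonassocOrder 17 := by
  have h : IsNonassocOrthomorphism (quadMap 4 8 : ZMod 17 → ZMod 17) := by
    apply isNonassocOrthomorphism_quadMap <;> decide +kernel
  simpa only [Nat.card_zmod] using h.isMaxNonassocOrder

instance : Fact (Nat.Prime 37) :=
  ⟨by decide⟩

theorem isMaxNonassocOrder_37 : IsMaxNonassocOrder 37 := by
  have h : IsNonassocOrthomorphism (quadMap 7 9 : ZMod 37 → ZMod 37) := by
    apply isNonassocOrthomorphism_quadMap <;> decide +kernel
  simpa only [Nat.card_zmod] using h.isMaxNonassocOrder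

/-- The field of order `25`, as `𝔽₅(√2)`. -/
abbrev F25 : Type :=
  QuadraticAlgebra (ZMod 5) 2 0

instance : Fact (Nat.Prime 5) :=
  ⟨Nat.prime_five⟩

instance : Fact (∀ r : ZMod 5, r ^ 2 ≠ 2 + 0 * r) :=
  ⟨by decide⟩

instance : Fintype F25 :=
  .ofEquiv _ (QuadraticAlgebra.equivProd 2 0).symm

theorem isMaxNonassocOrder_25 : IsMaxNonassocOrder 25 := by
  have h : IsNonassocOrthomorphism (quadMap ⟨0, 2⟩ ⟨0, 3⟩ : F25 → F25) := by
    apply isNonassocOrthomorphism_quadMap <;> decide +kernel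
  have hcard : Nat.card F25 = 25 := by
    rw [Nat.card_congr (QuadraticAlgebra.equivProd 2 0), Nat.card_prod, Nat.card_zmod]
  exact hcard ▸ h.isMaxNonassocOrder

/-- The field of order `125`, as `𝔽₅[t] / (t ^ 3 + t + 1)`; the element `⟨x, y, z⟩` stands for
`x + y t + z t ^ 2`. -/
@[ext]
structure F125 : Type where
  c₀ : ZMod 5
  c₁ : ZMod 5
  c₂ : ZMod 5
  deriving DecidableEq

namespace F125

/-- The coordinates in the basis `1, t, t ^ 2`. -/
def equivProd : F125 ≃ ZMod 5 × ZMod 5 × ZMod 5 where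
  toFun u := (u.c₀, u.c₁, u.c₂)
  invFun u := ⟨u.1, u.2.1, u.2.2⟩

instance : Fintype F125 :=
  .ofEquiv _ equivProd.symm

instance : AddCommGroup F125 :=
  equivProd.addCommGroup

/-- Polynomial multiplication, reduced by `t ^ 3 = -t - 1` and `t ^ 4 = -t ^ 2 - t`. -/
instance : Mul F125 where
  mul u v :=
    { c₀ := u.c₀ * v.c₀ - (u.c₁ * v.c₂ + u.c₂ * v.c₁)
      c₁ := u.c₀ * v.c₁ + u.c₁ * v.c₀ - (u.c₁ * v.c₂ + u.c₂ * v.c₁) - u.c₂ * v.c₂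
      c₂ := u.c₀ * v.c₂ + u.c₁ * v.c₁ + u.c₂ * v.c₀ - u.c₂ * v.c₂ }

instance : One F125 :=
  ⟨⟨1, 0, 0⟩⟩

theorem mul_eq (u v : F125) : u * v =
    ⟨u.c₀ * v.c₀ - (u.c₁ * v.c₂ + u.c₂ * v.c₁),
      u.c₀ * v.c₁ + u.c₁ * v.c₀ - (u.c₁ * v.c₂ + u.c₂ * v.c₁) - u.c₂ * v.c₂,
      u.c₀ * v.c₂ + u.c₁ * v.c₁ + u.c₂ * v.c₀ - u.c₂ * v.c₂⟩ :=
  rfl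

theorem add_eq (u v : F125) : u + v = ⟨u.c₀ + v.c₀, u.c₁ + v.c₁, u.c₂ + v.c₂⟩ :=
  rfl

theorem zero_eq : (0 : F125) = ⟨0, 0, 0⟩ :=
  rfl

theorem one_eq : (1 : F125) = ⟨1, 0, 0⟩ :=
  rfl

instance : CommRing F125 where
  __ : AddCommGroup F125 := inferInstance
  left_distrib u v w := by ext <;> simp only [mul_eq, add_eq] <;> ring
  right_distrib u v w := by ext <;> simp only [mul_eq, add_eq] <;> ring
  zero_mul u := by ext <;> simp only [mul_eq, zero_eq] <;> ring
  mul_zero u := by ext <;> simp only [mul_eq, zero_eq] <;> ring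
  mul_assoc u v w := by ext <;> simp only [mul_eq] <;> ring
  one_mul u := by ext <;> simp only [mul_eq, one_eq] <;> ring
  mul_one u := by ext <;> simp only [mul_eq, one_eq] <;> ring
  mul_comm u v := by ext <;> simp only [mul_eq] <;> ring

theorem isField : IsField F125 where
  exists_pair_ne := ⟨0, 1, by decide⟩
  mul_comm := mul_comm
  mul_inv_cancel := by decide +kernel

noncomputable instance : Field F125 :=
  isField.toField

end F125

theorem isMaxNonassocOrder_125 : IsMaxNonassocOrder 125 := by
  have h : IsNonassocOrthomorphism (quadMap ⟨0, 0, 1⟩ ⟨2, 3, 0⟩ : F125 → F125) := by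
    apply isNonassocOrthomorphism_quadMap <;> decide +kernel
  have hcard : Nat.card F125 = 125 := by
    simp only [Nat.card_congr F125.equivProd, Nat.card_prod, Nat.card_zmod]
  exact hcard ▸ h.isMaxNonassocOrder

end SporadicOrders

section PrimePowers

variable {p e : ℕ}

theorem isMaxNonassocOrder_prime (hp : p.Prime) (h4 : p % 4 = 1) (h13 : 13 ≤ p) :
    IsMaxNonassocOrder p := by
  have := Fact.mk hp
  rcases eq_or_ne p 17 with rfl | h17
  · exact isMaxNonassocOrder_17
  rcases eq_or_ne p 37 with rfl | h37
  · exact isMaxNonassocOrder_37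
  have hcard : Fintype.card (ZMod p) = p := ZMod.card p
  obtain ⟨a, ha⟩ : ∃ a : ZMod p, IsAdmissible a := by
    rcases lt_or_ge p 13456 with hlt | hge
    · exact exists_isAdmissible_zmod_of_lt hlt h4 h13 h17 h37
    · refine exists_isAdmissible_of_large ?_ (hcard.symm ▸ hge)
      rw [hcard, ZMod.ringChar_zmod_n]
      exact Nat.le_self_pow two_ne_zero p
  exact hcard ▸ ha.isMaxNonassocOrder (hcard.symm ▸ h4)

open scoped Classical in
theorem isMaxNonassocOrder_prime_sq (hp : p.Prime) (h3 : p % 4 = 3) :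
    IsMaxNonassocOrder (p ^ 2) := by
  have := Fact.mk hp
  have := Fintype.ofFinite (GaloisField p 2)
  have hcard : Fintype.card (GaloisField p 2) = p ^ 2 := by
    rw [← Nat.card_eq_fintype_card, GaloisField.card p 2 two_ne_zero]
  obtain ⟨a, ha⟩ : ∃ a : GaloisField p 2, IsAdmissible a := by
    rcases lt_or_ge p 116 with hlt | hge
    · exact exists_isAdmissible_of_card_eq_sq hcard hlt h3
    · refine exists_isAdmissible_of_large ?_ ?_
      · rw [hcard, ringChar.eq (GaloisField p 2) p]
      · rw [hcard]
        exact Nat.pow_le_pow_left hge 2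
  exact hcard ▸ ha.isMaxNonassocOrder (by rw [hcard, Nat.pow_mod, h3])

theorem isMaxNonassocOrder_five_pow (he : 2 ≤ e) : IsMaxNonassocOrder (5 ^ e) := by
  rcases Nat.even_or_odd' e with ⟨k, rfl | rfl⟩
  · rw [pow_mul]
    exact isMaxNonassocOrder_25.pow (by omega)
  · obtain ⟨j, rfl⟩ : ∃ j, k = j + 1 := Nat.exists_eq_add_one.2 (by omega)
    have hsplit : 5 ^ (2 * (j + 1) + 1) = 25 ^ j * 125 := by
      rw [show 25 = 5 ^ 2 by norm_num, ← pow_mul]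
      ring
    rw [hsplit]
    rcases eq_or_ne j 0 with rfl | hj
    · simpa only [pow_zero, one_mul] using isMaxNonassocOrder_125
    · exact (isMaxNonassocOrder_25.pow hj).mul isMaxNonassocOrder_125

theorem isMaxNonassocOrder_pow_of_mod_four_eq_one (hp : p.Prime) (h4 : p % 4 = 1)
    (h9 : 9 ≤ p ^ e) : IsMaxNonassocOrder (p ^ e) := by
  have he : e ≠ 0 := by
    rintro rfl
    rw [pow_zero] at h9
    omega
  rcases lt_or_ge p 13 with hlt | h13
  · obtain rfl : p = 5 := by interval_cases p <;> first | rfl | omega | norm_num at hp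
    have he1 : e ≠ 1 := by
      rintro rfl
      omega
    exact isMaxNonassocOrder_five_pow (by omega)
  · exact (isMaxNonassocOrder_prime hp h4 h13).pow he

theorem isMaxNonassocOrder_pow_of_mod_four_eq_three (hp : p.Prime) (h3 : p % 4 = 3)
    (he : e ≠ 0) (h4 : p ^ e % 4 = 1) : IsMaxNonassocOrder (p ^ e) := by
  have hsq : p ^ 2 % 4 = 1 := by rw [Nat.pow_mod, h3]
  rcases Nat.even_or_odd' e with ⟨k, rfl | rfl⟩
  · rw [pow_mul]
    exact (isMaxNonassocOrder_prime_sq hp h3).pow (by omega)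
  · rw [pow_succ, pow_mul, Nat.mul_mod, Nat.pow_mod, hsq, h3, one_pow] at h4
    contradiction

theorem isMaxNonassocOrder_of_isPrimePow {q : ℕ} (hq : IsPrimePow q) (h4 : q % 4 = 1)
    (h9 : 9 ≤ q) : IsMaxNonassocOrder q := by
  obtain ⟨p, e, hp, he, rfl⟩ := (isPrimePow_nat_iff q).1 hq
  have hodd : Odd p := Nat.Odd.of_mul_left (n := p ^ (e - 1)) <| by
    rw [mul_pow_sub_one he.ne', Nat.odd_iff]
    omega
  rcases Nat.odd_mod_four_iff.1 (Nat.odd_iff.1 hodd) with h1 | h3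
  · exact isMaxNonassocOrder_pow_of_mod_four_eq_one hp h1 h9
  · exact isMaxNonassocOrder_pow_of_mod_four_eq_three hp h3 he.ne' h4

end PrimePowers

end MaxNonassoc

/-- Theorem 3.5: for every prime power `q ≡ 1 (mod 4)` with `q ≥ 9` there is a
maximally nonassociative quasigroup of order `q`. -/
theorem exists_maxNonassoc_q1mod4 (q : ℕ) (hq : IsPrimePow q)
    (h4 : q % 4 = 1) (h9 : 9 ≤ q) :
    ∃ (Q : Type) (m : Q → Q → Q),
      Nat.card Q = q ∧
      (∀ a b : Q, (∃! x, m a x = b) ∧ (∃! y, m y a = b)) ∧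
      Nat.card {t : Q × Q × Q //
        m (m t.1 t.2.1) t.2.2 = m t.1 (m t.2.1 t.2.2)} = q := by
  obtain ⟨Q, m, rfl, hm⟩ := MaxNonassoc.isMaxNonassocOrder_of_isPrimePow hq h4 h9
  exact ⟨Q, m, rfl, fun a b => ⟨(hm.bijective_left a).existsUnique b,
    (hm.bijective_right a).existsUnique b⟩, hm.card_assoc_triples⟩
end
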